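/- arXiv:1910.12405 — 5 statements merged into one kernel-verified Lean document; each statement's English description precedes it below -/
import Mathlib

section
/- Let A be an associative (unital) ring in which p·1 = 0 for a prime p, and let x, y ∈ A. Write ad_a(b) := a*b − b*a. Assume that the elements x, ad_y(x), ad_y^2(x), ad_y^3(x), … (all iterated adjoints ad_y^n(x), n ≥ 0) pairwise commute. Then (x*y)^p = x^p * y^p − x * (ad_y)^{p−1}(x^{p−1}) * y, where (ad_y)^{p−1} denotes the (p−1)-fold iterate of the map b ↦ y*b − b*y. -/
open Polynomial in
/-- Apply a derivation to all coefficients. -/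
noncomputable def DelDhat {K P : Type*} [CommRing K] [CommRing P] [Algebra K P]
    (D : Derivation K P P) : Module.End K P[X] :=
  ((PolynomialModule.equivPolynomialSelf (R := P)).toLinearMap.restrictScalars K) ∘ₗ
    D.mapCoeffs.toLinearMap

open Polynomial in
lemma DelDhat_coeff {K P : Type*} [CommRing K] [CommRing P] [Algebra K P]
    (D : Derivation K P P) (f : P[X]) (n : ℕ) : (DelDhat D f).coeff n = D (f.coeff n) := rfl

open Polynomial in
/-- The operator `x (D + Y)` on `P[Y]`. -/
noncomputable def DelL {K P : Type*} [CommRing K] [CommRing P] [Algebra K P]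
    (D : Derivation K P P) (x : P) : Module.End K P[X] :=
  LinearMap.mulLeft K (C x) * (DelDhat D + LinearMap.mulLeft K (X : P[X]))

open Polynomial in
lemma DelL_apply {K P : Type*} [CommRing K] [CommRing P] [Algebra K P]
    (D : Derivation K P P) (x : P) (f : P[X]) :
    DelL D x f = C x * (DelDhat D f + X * f) := rfl

open Polynomial in
lemma DelDhat_monomial {K P : Type*} [CommRing K] [CommRing P] [Algebra K P]
    (D : Derivation K P P) (n : ℕ) (a : P) :
    DelDhat D (monomial n a) = monomial n (D a) := by
  ext m
  rw [DelDhat_coeff, coeff_monomial, coeff_monomial]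
  split_ifs <;> simp

open Polynomial in
lemma DelDhat_C_mul {K P : Type*} [CommRing K] [CommRing P] [Algebra K P]
    (D : Derivation K P P) (a : P) (f : P[X]) :
    DelDhat D (C a * f) = C a * DelDhat D f + C (D a) * f := by
  ext m
  simp only [DelDhat_coeff, coeff_C_mul, coeff_add, Derivation.leibniz, smul_eq_mul]
  ring

open Polynomial in
lemma DelDhat_mul_X {K P : Type*} [CommRing K] [CommRing P] [Algebra K P]
    (D : Derivation K P P) (f : P[X]) :
    DelDhat D (f * X) = DelDhat D f * X := by
  ext m
  cases m <;> simp [DelDhat_coeff]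

open Polynomial in
lemma DelDhat_derivative {K P : Type*} [CommRing K] [CommRing P] [Algebra K P]
    (D : Derivation K P P) (f : P[X]) :
    derivative (DelDhat D f) = DelDhat D (derivative f) := by
  ext m
  simp only [DelDhat_coeff, coeff_derivative, Derivation.leibniz, smul_eq_mul, map_add,
    Derivation.map_natCast, Derivation.map_one_eq_zero]
  ring

open Polynomial in
lemma DelL_pow_mul_X {K P : Type*} [CommRing K] [CommRing P] [Algebra K P]
    (D : Derivation K P P) (x : P) (n : ℕ) (f : P[X]) :
    (DelL D x ^ n) (f * X) = (DelL D x ^ n) f * X := by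
  induction n with
  | zero => simp
  | succ n ih =>
    rw [pow_succ', Module.End.mul_apply, Module.End.mul_apply, ih, DelL_apply, DelL_apply,
      DelDhat_mul_X]
    ring

open Polynomial in
/-- Normal ordering: evaluation turns `L` into left multiplication by `x y`. -/
lemma DelL_eval {K P A : Type*} [CommRing K] [CommRing P] [Algebra K P] [Ring A]
    (D : Derivation K P P) (x : P) (φ : P →+* A) (y : A)
    (h : ∀ a, y * φ a = φ a * y + φ (D a)) (n : ℕ) (f : P[X]) :
    eval₂ φ y ((DelL D x ^ n) f) = (φ x * y) ^ n * eval₂ φ y f := by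
  have key : ∀ f : P[X], eval₂ φ y (DelL D x f) = φ x * y * eval₂ φ y f := by
    intro f
    induction f using Polynomial.induction_on' with
    | add f g hf hg => rw [map_add, eval₂_add, hf, hg, eval₂_add, mul_add]
    | monomial m a =>
      rw [DelL_apply, DelDhat_monomial, X_mul_monomial, mul_add, C_mul_monomial, C_mul_monomial,
        eval₂_add, eval₂_monomial, eval₂_monomial, eval₂_monomial, map_mul, map_mul]
      rw [mul_assoc (φ x) y, ← mul_assoc y, h a, pow_succ']
      noncomm_ring
  induction n with
  | zero => simp
  | succ n ih => rw [pow_succ', Module.End.mul_apply, key, ih, pow_succ' (φ x * y), mul_assoc (φ x * y)]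

lemma Del_ad {p : ℕ} [Fact p.Prime] {M : Type*} [Ring M] [Algebra (ZMod p) M]
    [Nontrivial M] (L d : M) :
    (fun b => L * b - b * L)^[p] d = L ^ p * d - d * L ^ p := by
  have hchar : CharP (Module.End (ZMod p) M) p :=
    charP_of_injective_algebraMap (algebraMap (ZMod p) (Module.End (ZMod p) M)).injective p
  have h1 : (LinearMap.mulLeft (ZMod p) L - LinearMap.mulRight (ZMod p) L) ^ p =
      LinearMap.mulLeft (ZMod p) (L ^ p) - LinearMap.mulRight (ZMod p) (L ^ p) := by
    rw [sub_pow_char_of_commute _ (LinearMap.commute_mulLeft_right L L),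
      LinearMap.pow_mulLeft, LinearMap.pow_mulRight]
  have h2 := congrArg (fun T : Module.End (ZMod p) M => T d) h1
  simp only [Module.End.pow_apply] at h2
  exact h2

open Polynomial in
lemma DelL_derivative {p : ℕ} [Fact p.Prime] {P : Type*} [CommRing P] [Algebra (ZMod p) P]
    [Nontrivial P] (D : Derivation (ZMod p) P P) (x : P) :
    derivative ((DelL D x ^ p) 1) = C ((fun b => x * D b)^[p - 1] x) := by
  let d : Module.End (ZMod p) P[X] := (derivative (R := P)).restrictScalars (ZMod p)
  have hd : ∀ f, d f = derivative f := fun f => rfl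
  have h2 : DelL D x * d - d * DelL D x = LinearMap.mulLeft (ZMod p) (C (-x)) := by
    refine LinearMap.ext fun f => ?_
    rw [LinearMap.sub_apply, Module.End.mul_apply, Module.End.mul_apply]
    simp only [hd, DelL_apply,
      LinearMap.mulLeft_apply, derivative_mul, derivative_C, derivative_add, derivative_X,
      DelDhat_derivative, C_neg]
    ring
  have hstep : ∀ b : P, DelL D x * LinearMap.mulLeft (ZMod p) (C b) -
      LinearMap.mulLeft (ZMod p) (C b) * DelL D x =
      LinearMap.mulLeft (ZMod p) (C (x * D b)) := by
    intro b
    refine LinearMap.ext fun f => ?_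
    rw [LinearMap.sub_apply, Module.End.mul_apply, Module.End.mul_apply]
    simp only [DelL_apply, LinearMap.mulLeft_apply, DelDhat_C_mul, C_mul]
    ring
  have h3 : ∀ n (b : P), (fun b => DelL D x * b - b * DelL D x)^[n]
      (LinearMap.mulLeft (ZMod p) (C b)) =
      LinearMap.mulLeft (ZMod p) (C ((fun b => x * D b)^[n] b)) := by
    intro n
    induction n with
    | zero => intro b; rfl
    | succ n ih =>
      intro b
      rw [Function.iterate_succ_apply, Function.iterate_succ_apply, ← ih, hstep]
  have hneg : ∀ n (b : P), (fun b => x * D b)^[n] (-b) = - (fun b => x * D b)^[n] b := by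
    intro n
    induction n with
    | zero => intro b; rfl
    | succ n ih =>
      intro b
      rw [Function.iterate_succ_apply, Function.iterate_succ_apply, ← ih, map_neg, mul_neg]
  have h4 := Del_ad (p := p) (DelL D x) d
  have hp1 : p = (p - 1) + 1 := by have := (Fact.out : p.Prime).pos; omega
  have h6 : (fun b => DelL D x * b - b * DelL D x)^[p] d =
      LinearMap.mulLeft (ZMod p) (C (-(fun b => x * D b)^[p - 1] x)) := by
    rw [← hneg, ← h3, ← h2, ← Function.iterate_succ_apply (fun b => DelL D x * b - b * DelL D x),
      Nat.succ_eq_add_one, ← hp1]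
  rw [h6] at h4
  have h5 := congrArg (fun T : Module.End (ZMod p) P[X] => T 1) h4
  rw [LinearMap.sub_apply, Module.End.mul_apply, Module.End.mul_apply, hd, hd, derivative_one,
    map_zero, zero_sub, LinearMap.mulLeft_apply, mul_one, C_neg, neg_inj] at h5
  exact h5.symm

open Polynomial in
lemma DelL_coeff {K P : Type*} [CommRing K] [CommRing P] [Algebra K P]
    (D : Derivation K P P) (x : P) (n : ℕ) :
    ((DelL D x ^ n) 1).coeff n = x ^ n ∧ ∀ m, n < m → ((DelL D x ^ n) 1).coeff m = 0 := by
  induction n with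
  | zero => simp +contextual [coeff_one, eq_comm, Nat.pos_iff_ne_zero]
  | succ n ih =>
    rw [pow_succ', Module.End.mul_apply]
    constructor
    · rw [DelL_apply, coeff_C_mul, coeff_add, DelDhat_coeff, coeff_X_mul, ih.1, ih.2 _ (by omega)]
      rw [map_zero, zero_add, pow_succ']
    · intro m hm
      obtain ⟨m, rfl⟩ : ∃ k, m = k + 1 := ⟨m - 1, by omega⟩
      rw [DelL_apply, coeff_C_mul, coeff_add, DelDhat_coeff, coeff_X_mul, ih.2 _ (by omega),
        ih.2 _ (by omega)]
      simp

open Polynomial in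
lemma DelL_one (K : Type*) {P : Type*} [CommRing K] [CommRing P] [Algebra K P]
    (D : Derivation K P P) (x : P) : DelL D x 1 = C x * X := by
  rw [DelL_apply, ← monomial_zero_one, DelDhat_monomial]
  simp

open Polynomial in
/-- The pure normal form. -/
lemma DelL_pow_pred {p : ℕ} [Fact p.Prime] {P : Type*} [CommRing P] [Algebra (ZMod p) P]
    [IsDomain P] (D : Derivation (ZMod p) P P) (x : P) :
    (DelL D x ^ (p - 1)) (C x) = C (x ^ p) * X ^ (p - 1) + C ((fun b => x * D b)^[p - 1] x) := by
  have hp : p.Prime := Fact.out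
  have hchar : CharP P p :=
    charP_of_injective_algebraMap (algebraMap (ZMod p) P).injective p
  have hX : (DelL D x ^ (p - 1)) (C x) * X = (DelL D x ^ p) 1 := by
    rw [← DelL_pow_mul_X, ← DelL_one (ZMod p), ← Module.End.mul_apply, ← pow_succ,
      Nat.sub_add_cancel hp.pos]
  have hder := DelL_derivative D x
  have hco := DelL_coeff D x p
  ext m
  rw [← coeff_mul_X, hX, coeff_add, coeff_C_mul, coeff_X_pow, coeff_C]
  have hm := congrArg (fun f => coeff f m) hder
  simp only [coeff_derivative, coeff_C] at hm
  have hp2 := hp.two_le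
  rcases lt_trichotomy m (p - 1) with h | h | h
  · have h1 : ((m : P) + 1) ≠ 0 := by
      intro h0
      have : ((m + 1 : ℕ) : P) = 0 := by exact_mod_cast h0
      rw [CharP.cast_eq_zero_iff P p] at this
      have := Nat.le_of_dvd (by omega) this
      omega
    rw [if_neg h.ne, mul_zero, zero_add]
    by_cases h0 : m = 0
    · subst h0; simpa using hm
    · rw [if_neg h0] at hm ⊢
      exact (mul_eq_zero.mp hm).resolve_right h1
  · rw [if_pos h, if_neg (by omega), add_zero, mul_one, h, Nat.sub_add_cancel hp.pos, hco.1]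
  · rw [if_neg h.ne', if_neg (by omega), hco.2 _ (by omega)]
    simp

/-- Deligne's coefficient formula in a differential domain. -/
lemma Del_coeff_formula {p : ℕ} [Fact p.Prime] {P : Type*} [CommRing P] [Algebra (ZMod p) P]
    [IsDomain P] (D : Derivation (ZMod p) P P) (x : P) (hx : x ≠ 0) :
    (fun b => x * D b)^[p - 1] x = - (x * D^[p - 1] (x ^ (p - 1))) := by
  have hp : p.Prime := Fact.out
  have hchar : CharP P p :=
    charP_of_injective_algebraMap (algebraMap (ZMod p) P).injective p
  let φ : P →+* Module.End (ZMod p) P := (Algebra.lmul (ZMod p) P).toRingHom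
  have hφ : ∀ a b, φ a b = a * b := fun a b => rfl
  let y : Module.End (ZMod p) P := D.toLinearMap
  have hy : ∀ b, y b = D b := fun b => rfl
  have h := DelL_eval D x φ y (by
    intro a
    ext1 b
    simp only [Module.End.mul_apply, LinearMap.add_apply, hφ, hy, Derivation.leibniz, smul_eq_mul]
    ring) (p - 1) (Polynomial.C x)
  rw [DelL_pow_pred, Polynomial.eval₂_add, Polynomial.C_mul_X_pow_eq_monomial,
    Polynomial.eval₂_monomial, Polynomial.eval₂_C, Polynomial.eval₂_C] at h
  have h' := congrArg (fun T : Module.End (ZMod p) P => T (x ^ (p - 1))) h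
  have hxp : x * x ^ (p - 1) = x ^ p := by rw [← pow_succ', Nat.sub_add_cancel hp.pos]
  have hz : ((φ x * y) ^ (p - 1)) (x ^ p) = 0 := by
    obtain ⟨q, hq⟩ : ∃ q, p - 1 = q + 1 := ⟨p - 2, by have := hp.two_le; omega⟩
    rw [hq, pow_succ, Module.End.mul_apply, Module.End.mul_apply, hy, Derivation.leibniz_pow]
    simp
  simp only [Module.End.mul_apply, LinearMap.add_apply, hφ] at h'
  rw [hxp, hz, Module.End.pow_apply] at h'
  have h6 : x ^ (p - 1) * ((fun b => x * D b)^[p - 1] x + x * D^[p - 1] (x ^ (p - 1))) = 0 := by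
    have h'' : x ^ p * D^[p - 1] (x ^ (p - 1)) + (fun b => x * D b)^[p - 1] x * x ^ (p - 1) = 0 := h'
    rw [← hxp] at h''
    linear_combination h''
  exact eq_neg_of_add_eq_zero_left ((mul_eq_zero.mp h6).resolve_left (pow_ne_zero _ hx))

/-- **Deligne's identity.** In an associative unital ring `A` of characteristic `p`
(`p` prime), if `x` and all iterated adjoints `ad_y^n(x)` pairwise commute, then
`(x*y)^p = x^p * y^p - x * (ad_y)^{p-1}(x^{p-1}) * y`. -/
theorem deligne_identity (A : Type*) [Ring A] (p : ℕ) (hp : p.Prime)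
    (hchar : (p : A) = 0) (x y : A)
    (hcomm : ∀ m n : ℕ,
      Commute ((fun b => y * b - b * y)^[m] x) ((fun b => y * b - b * y)^[n] x)) :
    (x * y) ^ p =
      x ^ p * y ^ p - x * (fun b => y * b - b * y)^[p - 1] (x ^ (p - 1)) * y := by
  rcases subsingleton_or_nontrivial A with hA | hA
  · exact Subsingleton.elim _ _
  haveI : Fact p.Prime := ⟨hp⟩
  haveI : CharP A p := (CharP.charP_iff_prime_eq_zero hp).2 hchar
  letI : Algebra (ZMod p) A := ZMod.algebra A p
  let u : ℕ → A := fun n => (fun b => y * b - b * y)^[n] x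
  have hu : ∀ n, u (n + 1) = y * u n - u n * y := fun n => Function.iterate_succ_apply' _ _ _
  have hcs : ∀ a ∈ Set.range u, ∀ b ∈ Set.range u, a * b = b * a := by
    rintro _ ⟨m, rfl⟩ _ ⟨n, rfl⟩
    exact hcomm m n
  letI : CommRing (Algebra.adjoin (ZMod p) (Set.range u)) :=
    Algebra.adjoinCommRingOfComm (ZMod p) hcs
  let ψ : MvPolynomial ℕ (ZMod p) →ₐ[ZMod p] Algebra.adjoin (ZMod p) (Set.range u) :=
    MvPolynomial.aeval (fun n => ⟨u n, Algebra.subset_adjoin ⟨n, rfl⟩⟩)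
  let φ : MvPolynomial ℕ (ZMod p) →ₐ[ZMod p] A := (Algebra.adjoin (ZMod p) (Set.range u)).val.comp ψ
  have hφX : ∀ n, φ (MvPolynomial.X n) = u n := by
    intro n
    simp [φ, ψ]
  let D : Derivation (ZMod p) (MvPolynomial ℕ (ZMod p)) (MvPolynomial ℕ (ZMod p)) :=
    MvPolynomial.mkDerivation (ZMod p) (fun n => MvPolynomial.X (n + 1))
  have hDX : ∀ n, D (MvPolynomial.X n) = MvPolynomial.X (n + 1) :=
    fun n => MvPolynomial.mkDerivation_X _ _ _
  have hφD : ∀ a, y * φ a = φ a * y + φ (D a) := by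
    intro a
    induction a using MvPolynomial.induction_on with
    | C a =>
      have h0 : D (MvPolynomial.C a) = 0 := D.map_algebraMap a
      have h1 : φ (MvPolynomial.C a) = algebraMap (ZMod p) A a := φ.commutes a
      rw [h0, h1, map_zero, add_zero, Algebra.commutes]
    | add a b ha hb => rw [map_add, map_add, map_add, mul_add, ha, hb]; noncomm_ring
    | mul_X a n ha =>
      have hc : φ (MvPolynomial.X n) * φ (D a) = φ (D a) * φ (MvPolynomial.X n) := by
        rw [← map_mul, mul_comm, map_mul]
      rw [Derivation.leibniz, smul_eq_mul, smul_eq_mul, hDX, map_add, map_mul, map_mul, map_mul, hc,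
        ← mul_assoc, ha, hφX, hφX, hu]
      noncomm_ring
  have hit : ∀ n a, φ (D^[n] a) = (fun b => y * b - b * y)^[n] (φ a) := by
    intro n
    induction n with
    | zero => intro a; rfl
    | succ n ih =>
      intro a
      rw [Function.iterate_succ_apply, Function.iterate_succ_apply, ih, hφD, add_sub_cancel_left]
  have hx : φ (MvPolynomial.X 0) = x := hφX 0
  have h := DelL_eval D (MvPolynomial.X 0) φ.toRingHom y hφD (p - 1)
    (Polynomial.C (MvPolynomial.X 0))
  rw [DelL_pow_pred, Del_coeff_formula D _ (MvPolynomial.X_ne_zero 0), Polynomial.eval₂_add,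
    Polynomial.C_mul_X_pow_eq_monomial,
    Polynomial.eval₂_monomial, Polynomial.eval₂_C, Polynomial.eval₂_C] at h
  have h' : φ (MvPolynomial.X 0 ^ p) * y ^ (p - 1) +
      φ (-(MvPolynomial.X 0 * D^[p - 1] (MvPolynomial.X 0 ^ (p - 1)))) =
      (φ (MvPolynomial.X 0) * y) ^ (p - 1) * φ (MvPolynomial.X 0) := h
  rw [map_neg, map_mul, hit, map_pow, map_pow, hx] at h'
  have e1 : ∀ z : A, z ^ p = z ^ (p - 1) * z := fun z => by
    rw [← pow_succ, Nat.sub_add_cancel hp.pos]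
  rw [e1 (x * y), ← mul_assoc, ← h', e1 y]
  noncomm_ring
end

section
/- Let p be a prime, k a commutative ring with p·1 = 0, R a commutative k-algebra, and M an R-module. Let ∇ be a flat connection on M: an R-linear map ∂ ↦ ∇_∂ from Der_k(R) to the k-linear endomorphisms of M satisfying ∇_∂(r·m) = ∂(r)·m + r·∇_∂(m) for all r ∈ R, m ∈ M, and ∇_{[∂,∂']} = ∇_∂ ∘ ∇_{∂'} − ∇_{∂'} ∘ ∇_∂ for all ∂, ∂' ∈ Der_k(R). Define the p-curvature ψ(∂) := (∇_∂)^p − ∇_{∂^p}, where (∇_∂)^p is the p-fold composite and ∂^p is the p-fold composite of ∂ (which is again a derivation). Then: (1) ψ is Frobenius-semilinear, i.e. ψ(r·∂ + ∂') = r^p·ψ(∂) + ψ(∂') for all r ∈ R and ∂, ∂' ∈ Der_k(R); and (2) each ψ(∂) is R-linear, i.e. ψ(∂)(r·m) = r·ψ(∂)(m) for all r ∈ R, m ∈ M. -/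
open Polynomial

namespace PCurv

theorem choose_pred {A : Type*} [Ring A] (p : ℕ) (hp : p.Prime) (h : (p : A) = 0) (i : ℕ)
    (hi : i < p) : ((p - 1).choose i : A) = (-1) ^ i := by
  induction i with
  | zero => simp
  | succ i ih =>
    have h1 : p.choose (i + 1) = (p - 1).choose i + (p - 1).choose (i + 1) := by
      obtain ⟨q, rfl⟩ : ∃ q, p = q + 1 := ⟨p - 1, by omega⟩
      simp [Nat.choose_succ_succ]
    have h2 : (p.choose (i + 1) : A) = 0 := by
      obtain ⟨c, hc⟩ := hp.dvd_choose_self (k := i + 1) (by omega) hi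
      rw [hc]; simp [h]
    rw [h1] at h2
    push_cast at h2
    rw [ih (by omega)] at h2
    rw [pow_succ, mul_neg_one]
    exact (neg_eq_of_add_eq_zero_right h2).symm

/-- The commutator operator. -/
def ad {A : Type*} [Ring A] (z : A) : Module.End ℤ A :=
  LinearMap.mulLeft ℤ z - LinearMap.mulRight ℤ z

theorem ad_apply {A : Type*} [Ring A] (z w : A) : ad z w = z * w - w * z := by simp [ad]

theorem ad_pow_pred {A : Type*} [Ring A] (p : ℕ) (hp : p.Prime) (h : (p : A) = 0) (z w : A) :
    (ad z ^ (p - 1)) w = ∑ i ∈ Finset.range p, z ^ i * w * z ^ (p - 1 - i) := by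
  have hc : Commute (LinearMap.mulLeft ℤ z) (-LinearMap.mulRight ℤ z) :=
    (LinearMap.commute_mulLeft_right z z).neg_right
  have hpp : p - 1 + 1 = p := by have := hp.pos; omega
  rw [ad, sub_eq_add_neg, hc.add_pow, hpp, LinearMap.sum_apply]
  refine Finset.sum_congr rfl fun i hi => ?_
  have hi := Finset.mem_range.1 hi
  have hE : (p : Module.End ℤ A) = 0 := by
    ext v
    rw [Module.End.natCast_apply, nsmul_eq_mul, h]; simp
  have h1 := choose_pred p hp hE (p - 1 - i) (by omega)
  rw [Nat.choose_symm (by omega)] at h1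
  rw [neg_pow, h1, LinearMap.pow_mulLeft, LinearMap.pow_mulRight]
  rcases neg_one_pow_eq_or (Module.End ℤ A) (p - 1 - i) with h | h <;> rw [h] <;>
    simp [mul_assoc]

theorem ad_pow_char {A : Type*} [Ring A] (p : ℕ) (hp : p.Prime) (h : (p : A) = 0) (z w : A) :
    (ad z ^ p) w = z ^ p * w - w * z ^ p := by
  have hpp : p = p - 1 + 1 := by have := hp.pos; omega
  have h1 := ad_pow_pred p hp h z w
  have : (ad z ^ p) w = ad z ((ad z ^ (p - 1)) w) := by
    conv_lhs => rw [hpp, pow_succ']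
    rfl
  rw [this, h1, ad_apply, Finset.mul_sum, Finset.sum_mul, ← Finset.sum_sub_distrib]
  have := Finset.sum_range_sub (fun i => z ^ i * w * z ^ (p - i)) p
  simp only [pow_zero, one_mul, Nat.sub_zero, Nat.sub_self, mul_one] at this
  rw [← this]
  refine Finset.sum_congr rfl fun i hi => ?_
  have hi := Finset.mem_range.1 hi
  have e1 : p - (i + 1) = p - 1 - i := by omega
  have e2 : p - i = (p - 1 - i) + 1 := by omega
  rw [e1, e2, pow_succ z (p - 1 - i), pow_succ' z i]
  simp only [mul_assoc]

theorem derivative_pow {A : Type*} [Ring A] (z : A[X]) (n : ℕ) :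
    derivative (z ^ n) = ∑ i ∈ Finset.range n, z ^ i * derivative z * z ^ (n - 1 - i) := by
  induction n with
  | zero => simp
  | succ n ih =>
    rw [pow_succ, derivative_mul, ih, Finset.sum_range_succ, Finset.sum_mul]
    congr 1
    · refine Finset.sum_congr rfl fun i hi => ?_
      have hi := Finset.mem_range.1 hi
      rw [show n + 1 - 1 - i = n - 1 - i + 1 by omega, pow_succ]
      simp only [mul_assoc]
    · simp

theorem coeff_zpow {A : Type*} [Ring A] (p : ℕ) (hp : p.Prime) (h : (p : A) = 0) (x y : A) (k : ℕ) :
    ((C x * X + C y) ^ p).coeff (k + 1) * ((k + 1 : ℕ) : A) =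
      ((ad (C x * X + C y) ^ (p - 1)) (C x)).coeff k := by
  have h' : (p : A[X]) = 0 := by rw [← C_eq_natCast, h, C_0]
  have := derivative_pow (C x * X + C y) p
  rw [show derivative (C x * X + C y) = C x by simp, ← ad_pow_pred p hp h'] at this
  rw [← this, coeff_derivative]; simp

theorem coeff_zpow_top {A : Type*} [Ring A] (p : ℕ) (x y : A) :
    ((C x * X + C y) ^ p).coeff p = x ^ p := by
  have := coeff_pow_of_natDegree_le (p := C x * X + C y) (m := p) natDegree_linear_le
  simpa using this

theorem coeff_zpow_zero {A : Type*} [Ring A] (p : ℕ) (x y : A) :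
    ((C x * X + C y) ^ p).coeff 0 = y ^ p := by
  induction p with
  | zero => simp
  | succ n ih => rw [pow_succ, mul_coeff_zero, ih, pow_succ]; simp

theorem mem_of_mul_mem {A : Type*} [Ring A] (p : ℕ) (hp : p.Prime) (h : (p : A) = 0)
    (L : AddSubgroup A) (a : A) (k : ℕ) (hk : ¬ p ∣ k) (ha : a * (k : A) ∈ L) : a ∈ L := by
  have hco : IsCoprime (k : ℤ) (p : ℤ) := by
    rw [Nat.isCoprime_iff_coprime]
    exact ((Nat.Prime.coprime_iff_not_dvd hp).2 hk).symm
  obtain ⟨u, v, huv⟩ := hco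
  have : a = u • (a * (k : A)) := by
    have h2 : ((u * k + v * p : ℤ) : A) = 1 := by rw [huv]; simp
    push_cast at h2
    rw [h, mul_zero, add_zero] at h2
    rw [zsmul_eq_mul, ← mul_assoc, (Int.cast_commute u a).eq, mul_assoc, h2, mul_one]
  rw [this]
  exact L.zsmul_mem ha u

theorem coeff_ad_mem {A : Type*} [Ring A] (L : AddSubgroup A)
    (hL : ∀ a ∈ L, ∀ b ∈ L, a * b - b * a ∈ L) (x y : A) (hx : x ∈ L) (hy : y ∈ L) (n : ℕ) (k : ℕ) :
    ((ad (C x * X + C y) ^ n) (C x)).coeff k ∈ L := by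
  induction n generalizing k with
  | zero => 
    simp only [pow_zero, Module.End.one_apply, coeff_C]
    split_ifs
    · exact hx
    · exact L.zero_mem
  | succ n ih =>
    rw [pow_succ', Module.End.mul_apply, ad_apply]
    set f := (ad (C x * X + C y) ^ n) (C x)
    have e : (C x * X + C y) * f - f * (C x * X + C y) =
      (C x * f - f * C x) * X + (C y * f - f * C y) := by
      have := X_mul (p := f)
      simp only [add_mul, mul_add, sub_mul, mul_assoc, X_mul]
      abel
    rw [e, coeff_add]
    refine L.add_mem ?_ ?_
    · cases k with
      | zero => simp [L.zero_mem]
      | succ k => 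
        rw [coeff_mul_X, coeff_sub, coeff_C_mul, coeff_mul_C]
        exact hL _ hx _ (ih k)
    · rw [coeff_sub, coeff_C_mul, coeff_mul_C]
      exact hL _ hy _ (ih k)

theorem jacobson {A : Type*} [Ring A] (p : ℕ) (hp : p.Prime) (h : (p : A) = 0) (L : AddSubgroup A)
    (hL : ∀ a ∈ L, ∀ b ∈ L, a * b - b * a ∈ L) (x y : A) (hx : x ∈ L) (hy : y ∈ L) :
    (x + y) ^ p - x ^ p - y ^ p ∈ L := by
  let φ : A[X] →+* A := eval₂RingHom' (RingHom.id A) 1 (fun a => Commute.one_right a)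
  have h1 : φ (C x * X + C y) = x + y := by
    simp [φ, eval₂RingHom']
  have h2 : ∀ f : A[X], φ f = f.eval 1 := fun f => rfl
  have hdeg : ((C x * X + C y) ^ p).natDegree < p + 1 := by
    have := natDegree_pow_le_of_le p (natDegree_linear_le (a := x) (b := y))
    omega
  have h3 : (x + y) ^ p = ∑ i ∈ Finset.range (p + 1), ((C x * X + C y) ^ p).coeff i := by
    rw [← h1, ← map_pow, h2, eval_eq_sum_range' hdeg]
    simp
  obtain ⟨q, rfl⟩ : ∃ q, p = q + 1 := ⟨p - 1, by have := hp.pos; omega⟩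
  rw [Finset.sum_range_succ, coeff_zpow_top, Finset.sum_range_succ', coeff_zpow_zero] at h3
  rw [h3]
  rw [show ∀ a b c : A, a + b + c - c - b = a by intros; abel]
  refine L.sum_mem fun i hi => ?_
  have hi := Finset.mem_range.1 hi
  refine mem_of_mul_mem (q + 1) hp h L _ (i + 1) (Nat.not_dvd_of_pos_of_lt (by omega) (by omega)) ?_
  rw [coeff_zpow _ hp h]
  exact coeff_ad_mem L hL x y hx hy _ _

section
variable {k R : Type*} [CommRing k] [CommRing R] [Algebra k R]

/-- The polynomial operator `δ + a X` with `δ = a D`. -/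
noncomputable def Q (D : Derivation k R R) (a : R) : (Module.End k R)[X] :=
  C (LinearMap.mulLeft k a) * X + C ((a • D : Derivation k R R) : R →ₗ[k] R)

/-- The coefficients of the expansion of `(a D) ^ n`. -/
noncomputable def B (D : Derivation k R R) (a : R) (n j : ℕ) : R :=
  ((Q D a ^ n).coeff j) 1

theorem B_succ_zero (D : Derivation k R R) (a : R) (n : ℕ) :
    B D a (n + 1) 0 = a * D (B D a n 0) := by
  simp [B, pow_succ', Q, add_mul, mul_assoc]

theorem B_succ_succ (D : Derivation k R R) (a : R) (n j : ℕ) :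
    B D a (n + 1) (j + 1) = a * B D a n j + a * D (B D a n (j + 1)) := by
  simp only [B, pow_succ']
  conv_lhs => rw [Q, add_mul, mul_assoc, X_mul, ← Q]
  simp [coeff_C_mul, ← mul_assoc]

theorem B_zero_zero (D : Derivation k R R) (a : R) : B D a 0 0 = 1 := by simp [B]

theorem B_of_lt (D : Derivation k R R) (a : R) (n j : ℕ) (h : n < j) : B D a n j = 0 := by
  have : (Q D a ^ n).natDegree ≤ n := by
    have := natDegree_pow_le_of_le n (natDegree_linear_le
      (a := LinearMap.mulLeft k a) (b := ((a • D : Derivation k R R) : R →ₗ[k] R)))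
    simpa [Q] using this
  rw [B, coeff_eq_zero_of_natDegree_lt (by omega)]; simp

theorem B_top (D : Derivation k R R) (a : R) (n : ℕ) : B D a n n = a ^ n := by
  rw [B, Q, coeff_zpow_top, LinearMap.pow_mulLeft]; simp

theorem B_zero (D : Derivation k R R) (a : R) (n : ℕ) (hn : 0 < n) : B D a n 0 = 0 := by
  induction n, hn using Nat.le_induction with
  | base => simp [B_succ_zero, B_zero_zero]
  | succ n _ ih => simp [B_succ_zero, ih]

theorem ad_Q (D : Derivation k R R) (a b : R) (n : ℕ) :
    ∃ c : R, (ad (Q D a) ^ n) (C (LinearMap.mulLeft k b)) = C (LinearMap.mulLeft k c) := by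
  induction n with
  | zero => exact ⟨b, rfl⟩
  | succ n ih =>
    obtain ⟨c, hc⟩ := ih
    refine ⟨a * D c, ?_⟩
    rw [pow_succ', Module.End.mul_apply, hc, ad_apply, Q]
    have e1 : LinearMap.mulLeft k a * LinearMap.mulLeft k c =
        LinearMap.mulLeft k c * LinearMap.mulLeft k a := by
      ext v; simp [mul_left_comm]
    have e2 : ((a • D : Derivation k R R) : R →ₗ[k] R) * LinearMap.mulLeft k c -
        LinearMap.mulLeft k c * ((a • D : Derivation k R R) : R →ₗ[k] R) =
        LinearMap.mulLeft k (a * D c) := by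
      ext v; simp; ring
    rw [add_mul, mul_add, mul_assoc, X_mul, ← mul_assoc, ← mul_assoc, ← C_mul, ← C_mul, ← C_mul,
      ← C_mul, e1, ← e2, C_sub]
    abel

theorem B_mid (p : ℕ) (hp : p.Prime) (hk : (p : k) = 0) (D : Derivation k R R) (a : R) (j : ℕ)
    (h1 : 1 < j) (h2 : j < p) : B D a p j = 0 := by
  have hE : (p : Module.End k R) = 0 := by
    rw [← map_natCast (algebraMap k (Module.End k R)), hk, map_zero]
  obtain ⟨i, rfl⟩ : ∃ i, j = i + 1 := ⟨j - 1, by omega⟩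
  have := coeff_zpow p hp hE (LinearMap.mulLeft k a) ((a • D : Derivation k R R) : R →ₗ[k] R) i
  obtain ⟨c, hc⟩ := ad_Q D a a (p - 1)
  rw [← Q, hc, coeff_C_of_ne_zero (by omega)] at this
  have := mem_of_mul_mem p hp hE ⊥ _ (i + 1) (Nat.not_dvd_of_pos_of_lt (by omega) h2)
    (by rw [this]; exact AddSubgroup.zero_mem _)
  rw [AddSubgroup.mem_bot] at this
  rw [B, this]; simp

variable {M : Type*} [AddCommGroup M] [Module k M] [Module R M]

theorem pow_expand (D : Derivation k R R) (N T : Module.End k M)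
    (hN : ∀ (r : R) (m : M), N (r • m) = D r • m + r • N m) (a : R)
    (hT : ∀ m, T m = a • N m) (n : ℕ) (m : M) :
    (T ^ n) m = ∑ j ∈ Finset.range (n + 1), B D a n j • (N ^ j) m := by
  induction n with
  | zero => simp [B_zero_zero]
  | succ n ih =>
    rw [pow_succ', Module.End.mul_apply, ih, map_sum, Finset.sum_range_succ' _ (n + 1)]
    simp only [hT, hN, B_succ_succ, B_succ_zero, smul_add, add_smul, Finset.sum_add_distrib,
      ← mul_smul]
    have e := Finset.sum_range_succ' (fun j => (a * D (B D a n j)) • (N ^ j) m) (n + 1)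
    rw [Finset.sum_range_succ, B_of_lt D a n (n + 1) (by omega)] at e
    simp only [map_zero, mul_zero, zero_smul, add_zero] at e
    rw [e]
    simp only [pow_succ', Module.End.mul_apply]
    abel

theorem hochschild (p : ℕ) (hp : p.Prime) (hk : (p : k) = 0) (D : Derivation k R R)
    (N T : Module.End k M)
    (hN : ∀ (r : R) (m : M), N (r • m) = D r • m + r • N m) (a : R)
    (hT : ∀ m, T m = a • N m) (m : M) :
    (T ^ p) m = a ^ p • (N ^ p) m + B D a p 1 • N m := by
  rw [pow_expand D N T hN a hT]
  have h2 := hp.two_le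
  obtain ⟨q, rfl⟩ : ∃ q, p = q + 2 := ⟨p - 2, by omega⟩
  rw [Finset.sum_range_succ, Finset.sum_range_succ', Finset.sum_range_succ', B_top,
    B_zero _ _ _ (by omega), Finset.sum_eq_zero, add_comm]
  · simp
  · intro i hi
    have hi := Finset.mem_range.1 hi
    rw [B_mid _ hp hk D a _ (by omega) (by omega), zero_smul]

theorem leibniz_pow (p : ℕ) (hp : p.Prime) (hk : (p : k) = 0) [IsScalarTower k R M]
    (D : Derivation k R R) (N : Module.End k M)
    (hN : ∀ (r : R) (m : M), N (r • m) = D r • m + r • N m) (r : R) (m : M) :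
    (N ^ p) (r • m) = (D^[p] r) • m + r • (N ^ p) m := by
  have hE : (p : Module.End k M) = 0 := by
    rw [← map_natCast (algebraMap k (Module.End k M)), hk, map_zero]
  have key : ∀ n, (ad N ^ n) (Algebra.lsmul k k M r) = Algebra.lsmul k k M (D^[n] r) := by
    intro n
    induction n with
    | zero => rfl
    | succ n ih =>
      rw [pow_succ', Module.End.mul_apply, ih, ad_apply, Function.iterate_succ_apply']
      ext m
      simp [hN]
  have h1 := ad_pow_char p hp hE N (Algebra.lsmul k k M r)
  rw [key] at h1
  have := LinearMap.congr_fun h1 m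
  simp at this
  rw [this]; abel

end

end PCurv


/-- The `p`-curvature `ψ(∂) = (∇_∂)^p − ∇_{∂^p}` of a flat connection `∇` on an `R`-module
`M` (in characteristic `p`) is Frobenius-semilinear in `∂`, and each `ψ(∂)` is `R`-linear. -/
theorem pCurvature_semilinear_and_linear (p : ℕ) (hp : p.Prime)
    (k : Type*) [CommRing k] (R : Type*) [CommRing R] [Algebra k R]
    (hchar : (p : k) = 0)
    (M : Type*) [AddCommGroup M] [Module k M] [Module R M] [IsScalarTower k R M]
    (nabla : Derivation k R R → Module.End k M)
    (hadd : ∀ D D' : Derivation k R R, nabla (D + D') = nabla D + nabla D')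
    (hsmul : ∀ (r : R) (D : Derivation k R R) (m : M), nabla (r • D) m = r • nabla D m)
    (hLeib : ∀ (D : Derivation k R R) (r : R) (m : M),
      nabla D (r • m) = D r • m + r • nabla D m)
    (hflat : ∀ D D' : Derivation k R R,
      nabla ⁅D, D'⁆ = nabla D * nabla D' - nabla D' * nabla D)
    (Dpow : Derivation k R R → Derivation k R R)
    (hDpow : ∀ (D : Derivation k R R) (x : R), Dpow D x = (⇑D)^[p] x) :
    (∀ (r : R) (D D' : Derivation k R R) (m : M),
        (nabla (r • D + D') ^ p - nabla (Dpow (r • D + D'))) m =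
          r ^ p • ((nabla D ^ p - nabla (Dpow D)) m) +
            (nabla D' ^ p - nabla (Dpow D')) m) ∧
    (∀ (D : Derivation k R R) (r : R) (m : M),
        (nabla D ^ p - nabla (Dpow D)) (r • m) =
          r • (nabla D ^ p - nabla (Dpow D)) m) := by
  classical
  have hcoe : ∀ (D : Derivation k R R) (n : ℕ) (x : R),
      ((D : R →ₗ[k] R) ^ n : Module.End k R) x = D^[n] x := by
    intro D n x
    rw [Module.End.pow_apply]; rfl
  have hR : (p : Module.End k R) = 0 := by
    rw [← map_natCast (algebraMap k (Module.End k R)), hchar, map_zero]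
  have hM : (p : Module.End k M) = 0 := by
    rw [← map_natCast (algebraMap k (Module.End k M)), hchar, map_zero]
  have hE : (p : Module.End k R × Module.End k M) = 0 := Prod.ext hR hM
  let F : Derivation k R R →+ Module.End k R × Module.End k M :=
    AddMonoidHom.mk' (fun D => ((D : R →ₗ[k] R), nabla D)) (by
      intro D D'
      exact Prod.ext rfl (hadd D D'))
  have hsub : ∀ D D', nabla (D - D') = nabla D - nabla D' := fun D D' =>
    congrArg Prod.snd (map_sub F D D')
  have hL : ∀ a ∈ F.range, ∀ b ∈ F.range, a * b - b * a ∈ F.range := by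
    rintro _ ⟨D, rfl⟩ _ ⟨D', rfl⟩
    refine ⟨⁅D, D'⁆, Prod.ext ?_ (hflat D D')⟩
    ext x
    exact Derivation.commutator_apply (D1 := D) (D2 := D') (a := x)
  have hpsi_add : ∀ D D', nabla (D + D') ^ p - nabla (Dpow (D + D')) =
      (nabla D ^ p - nabla (Dpow D)) + (nabla D' ^ p - nabla (Dpow D')) := by
    intro D D'
    obtain ⟨D'', hD''⟩ := PCurv.jacobson p hp hE F.range hL (F D) (F D') ⟨D, rfl⟩ ⟨D', rfl⟩
    rw [← map_add] at hD''
    have h1 : (D'' : R →ₗ[k] R) = ((D + D' : Derivation k R R) : R →ₗ[k] R) ^ p -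
        (D : R →ₗ[k] R) ^ p - (D' : R →ₗ[k] R) ^ p := congrArg Prod.fst hD''
    have h2 : nabla D'' = nabla (D + D') ^ p - nabla D ^ p - nabla D' ^ p :=
      congrArg Prod.snd hD''
    have h3 : D'' = Dpow (D + D') - Dpow D - Dpow D' := by
      ext x
      have := LinearMap.congr_fun h1 x
      simp only [LinearMap.sub_apply] at this
      rw [hcoe, hcoe, hcoe, ← hDpow, ← hDpow, ← hDpow] at this
      exact this
    rw [h3, hsub, hsub] at h2
    have h4 : nabla (Dpow (D + D')) = nabla (D + D') ^ p - nabla D ^ p - nabla D' ^ p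
        + nabla (Dpow D') + nabla (Dpow D) := by
      rw [← h2]; abel
    rw [h4]; abel
  have hpsi_smul : ∀ (r : R) D (m : M), (nabla (r • D) ^ p - nabla (Dpow (r • D))) m =
      r ^ p • (nabla D ^ p - nabla (Dpow D)) m := by
    intro r D m
    have h1 := PCurv.hochschild p hp hchar D (nabla D) (nabla (r • D)) (hLeib D) r (hsmul r D) m
    have h2 : Dpow (r • D) = r ^ p • Dpow D + PCurv.B D r p 1 • D := by
      ext x
      have := PCurv.hochschild p hp hchar D (D : R →ₗ[k] R) ((r • D : Derivation k R R) : R →ₗ[k] R)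
        (by intro s t; simp; ring) r (by intro t; simp) x
      rw [hcoe, hcoe, ← hDpow, ← hDpow] at this
      simpa using this
    rw [LinearMap.sub_apply, LinearMap.sub_apply, h1, h2, hadd, LinearMap.add_apply, hsmul, hsmul,
      smul_sub]
    abel
  refine ⟨fun r D D' m => ?_, fun D r m => ?_⟩
  · rw [hpsi_add, LinearMap.add_apply, hpsi_smul]
  · rw [LinearMap.sub_apply, LinearMap.sub_apply,
      PCurv.leibniz_pow p hp hchar D (nabla D) (hLeib D), hLeib, hDpow, smul_sub]
    abel
end

section
/- Let p be a prime, K a field of characteristic p, d ≥ 1, and let a_1, …, a_d, b_1, …, b_d ∈ K. Then the quotient of the d-th Weyl algebra W_d(K) by the two-sided ideal generated by the elements t_i^p − a_i and ∂_i^p − b_i (1 ≤ i ≤ d) is a central simple K-algebra of dimension p^{2d} over K: its center is K·1, it has no two-sided ideals other than 0 and itself, and it has K-dimension p^{2d}. -/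
noncomputable section

/-- The defining relations of the `d`-th Weyl algebra: `t_i t_j = t_j t_i`,
`∂_i ∂_j = ∂_j ∂_i` and `∂_i t_j = t_j ∂_i + δ_{ij}`. -/
inductive WeylRel (k : Type*) [CommRing k] (d : ℕ) :
    FreeAlgebra k (Fin d ⊕ Fin d) → FreeAlgebra k (Fin d ⊕ Fin d) → Prop
  | tt (i j : Fin d) :
      WeylRel k d (FreeAlgebra.ι k (Sum.inl i) * FreeAlgebra.ι k (Sum.inl j))
        (FreeAlgebra.ι k (Sum.inl j) * FreeAlgebra.ι k (Sum.inl i))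
  | dd (i j : Fin d) :
      WeylRel k d (FreeAlgebra.ι k (Sum.inr i) * FreeAlgebra.ι k (Sum.inr j))
        (FreeAlgebra.ι k (Sum.inr j) * FreeAlgebra.ι k (Sum.inr i))
  | dt (i j : Fin d) :
      WeylRel k d (FreeAlgebra.ι k (Sum.inr i) * FreeAlgebra.ι k (Sum.inl j))
        (FreeAlgebra.ι k (Sum.inl j) * FreeAlgebra.ι k (Sum.inr i) + if i = j then 1 else 0)

/-- The `d`-th Weyl algebra over `k`: the free algebra on `t_1,…,t_d,∂_1,…,∂_d` modulo the
two-sided ideal generated by the Weyl relations. -/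
abbrev WeylAlgebra (k : Type*) [CommRing k] (d : ℕ) := RingQuot (WeylRel k d)

namespace WeylAlgebra

variable (k : Type*) [CommRing k] (d : ℕ)

/-- The generator `t_i` of the Weyl algebra. -/
def t (i : Fin d) : WeylAlgebra k d :=
  RingQuot.mkAlgHom k (WeylRel k d) (FreeAlgebra.ι k (Sum.inl i))

/-- The generator `∂_i` of the Weyl algebra. -/
def del (i : Fin d) : WeylAlgebra k d :=
  RingQuot.mkAlgHom k (WeylRel k d) (FreeAlgebra.ι k (Sum.inr i))

/-- The monomial `t^I = t_1^{i_1} ⋯ t_d^{i_d}` in the Weyl algebra. -/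
def monomialT (I : Fin d → ℕ) : WeylAlgebra k d :=
  ((List.finRange d).map fun i => t k d i ^ I i).prod

/-- The monomial `∂^J = ∂_1^{j_1} ⋯ ∂_d^{j_d}` in the Weyl algebra. -/
def monomialD (J : Fin d → ℕ) : WeylAlgebra k d :=
  ((List.finRange d).map fun i => del k d i ^ J i).prod

end WeylAlgebra

open WeylAlgebra in
/-- The relations `t_i^p = a_i`, `∂_i^p = b_i` imposed on the Weyl algebra `W_d(K)`;
the quotient by them is the quotient of `W_d(K)` by the two-sided ideal generated by the
elements `t_i^p − a_i` and `∂_i^p − b_i`. -/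
inductive WeylCentralRel (K : Type*) [CommRing K] (d p : ℕ) (a b : Fin d → K) :
    WeylAlgebra K d → WeylAlgebra K d → Prop
  | t (i : Fin d) :
      WeylCentralRel K d p a b (t K d i ^ p) (algebraMap K (WeylAlgebra K d) (a i))
  | del (i : Fin d) :
      WeylCentralRel K d p a b (del K d i ^ p) (algebraMap K (WeylAlgebra K d) (b i))

open MvPolynomial in
theorem wq_exists_hom {K A ι : Type*} [Field K] [Ring A] [Algebra K A] (x : ι → A)
    (h : ∀ i j, x i * x j = x j * x i) :
    ∃ φ : MvPolynomial ι K →ₐ[K] A, ∀ i, φ (X i) = x i := by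
  have hc : ∀ a ∈ Set.range x, ∀ b ∈ Set.range x, a * b = b * a := by
    rintro _ ⟨i, rfl⟩ _ ⟨j, rfl⟩; exact h i j
  letI := Algebra.adjoinCommRingOfComm K hc
  let y : ι → Algebra.adjoin K (Set.range x) :=
    fun i => ⟨x i, Algebra.subset_adjoin ⟨i, rfl⟩⟩
  let ψ : MvPolynomial ι K →ₐ[K] Algebra.adjoin K (Set.range x) := aeval y
  refine ⟨(Algebra.adjoin K (Set.range x)).val.comp ψ, fun i => ?_⟩
  change (Algebra.adjoin K (Set.range x)).val (aeval y (X i)) = x i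
  rw [aeval_X]
  rfl

open MvPolynomial in
theorem wq_pderiv_restrict {K σ : Type*} [Field K] (N : ℕ) (f : MvPolynomial σ K)
    (hf : f ∈ restrictDegree σ K N) (s : σ) : pderiv s f ∈ restrictDegree σ K N := by
  rw [mem_restrictDegree] at hf ⊢
  intro m hm i
  have h1 : m + Finsupp.single s 1 ∈ f.support := by
    rw [mem_support_iff] at hm ⊢
    rw [coeff_pderiv] at hm
    exact left_ne_zero_of_mul hm
  have := hf _ h1 i
  simp only [Finsupp.add_apply] at this
  omega

open MvPolynomial in
theorem wq_const {K σ : Type*} [Field K] (p : ℕ) (hp : p.Prime) [CharP K p]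
    (f : MvPolynomial σ K) (hf : f ∈ restrictDegree σ K (p - 1))
    (h : ∀ s, pderiv s f = 0) : f = C (coeff 0 f) := by
  classical
  ext m
  rw [coeff_C]
  split_ifs with hm
  · rw [hm]
  · by_contra hne
    obtain ⟨s, hs⟩ : ∃ s, m s ≠ 0 := by
      by_contra! hh
      exact hm (by ext s; simp [hh s])
    have h1 := congrArg (coeff (m - Finsupp.single s 1)) (h s)
    have h2 : m - Finsupp.single s 1 + Finsupp.single s 1 = m := by
      ext t
      by_cases hst : s = t
      · subst hst; simp; omega
      · simp [hst]
    rw [coeff_pderiv, h2, coeff_zero] at h1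
    have h3 := (mul_eq_zero.mp h1).resolve_left hne
    have h4 : ((m s : ℕ) : K) = 0 := by
      rw [← h3]
      have : m s = (m s - 1) + 1 := by omega
      rw [this]
      simp
    rw [CharP.cast_eq_zero_iff K p] at h4
    have h5 := (mem_restrictDegree _ _ _).mp hf m (mem_support_iff.mpr hne) s
    have := Nat.le_of_dvd (by omega) h4
    have := hp.pos
    omega

open MvPolynomial in
theorem wq_one_mem {K A σ : Type*} [Field K] [Ring A] [Algebra K A] (p : ℕ) (hp : p.Prime)
    [CharP K p] (Φ : MvPolynomial σ K →ₗ[K] A) (h1 : Φ 1 = 1) (δ : σ → A → A)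
    (hδ : ∀ s f, δ s (Φ f) = Φ (pderiv s f)) (J : Set A)
    (hJs : ∀ (c : K) a, a ∈ J → c • a ∈ J) (hJ : ∀ s a, a ∈ J → δ s a ∈ J) (N : ℕ) :
    ∀ f ∈ restrictDegree σ K (p - 1), (∀ m ∈ f.support, m.degree < N) → f ≠ 0 → Φ f ∈ J →
      (1 : A) ∈ J := by
  induction N with
  | zero =>
    intro f _ h hne
    exact absurd (by rw [← support_eq_empty]; ext m; simpa using h m) hne
  | succ N ih =>
    intro f hf hdeg hne hfJ
    by_cases hd : ∀ s, pderiv s f = 0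
    · have hc := wq_const p hp f hf hd
      have hc0 : coeff 0 f ≠ 0 := by
        intro h0
        rw [h0] at hc
        exact hne (by simpa using hc)
      have := hJs (coeff 0 f)⁻¹ _ hfJ
      rw [hc] at this
      rwa [show (C (coeff 0 f) : MvPolynomial σ K) = (coeff 0 f) • 1 by
        rw [smul_eq_C_mul, mul_one], map_smul, h1, coeff_smul, coeff_zero_one, smul_smul,
        smul_eq_mul, mul_one, inv_mul_cancel₀ hc0, one_smul] at this
    · push Not at hd
      obtain ⟨s, hs⟩ := hd
      refine ih _ (wq_pderiv_restrict _ f hf s) ?_ hs (by rw [← hδ]; exact hJ _ _ hfJ)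
      intro m hm
      have h1 : m + Finsupp.single s 1 ∈ f.support := by
        rw [mem_support_iff] at hm ⊢
        rw [coeff_pderiv] at hm
        exact left_ne_zero_of_mul hm
      have := hdeg _ h1
      rw [map_add, Finsupp.degree_single] at this
      omega

open MvPolynomial in
theorem wq_finrank {K σ : Type*} [Field K] [Fintype σ] (p : ℕ) (hp : p.Prime) :
    Module.finrank K (restrictDegree σ K (p - 1)) = p ^ (Fintype.card σ) := by
  classical
  have hp0 := hp.pos
  rw [show restrictDegree σ K (p - 1) = restrictSupport K { n | ∀ i, n i ≤ p - 1 } from rfl]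
  rw [Module.finrank_eq_nat_card_basis (basisRestrictSupport K _)]
  have e : { n : σ →₀ ℕ | ∀ i, n i ≤ p - 1 } ≃ (σ → Fin p) :=
    { toFun := fun n i => ⟨n.1 i, by have := n.2 i; omega⟩
      invFun := fun g => ⟨Finsupp.equivFunOnFinite.symm fun i => (g i : ℕ), by
        intro i
        have := (g i).2
        simp only [Finsupp.equivFunOnFinite_symm_apply_apply]
        omega⟩
      left_inv := fun n => by ext; simp
      right_inv := fun g => by ext; simp }
  rw [Nat.card_congr e]
  simp

/-- abstract statement, in terms of a linear map from polynomials. -/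
theorem wq_abstract {K A σ : Type*} [Field K] [Ring A] [Algebra K A] [Nontrivial A] [Fintype σ]
    (p : ℕ) (hp : p.Prime)
    [CharP K p] (Φ : MvPolynomial σ K →ₗ[K] A) (h1 : Φ 1 = 1) (u : σ → A)
    (hδ : ∀ s f, u s * Φ f - Φ f * u s = Φ (MvPolynomial.pderiv s f))
    (hsurj : ∀ a, ∃ f ∈ MvPolynomial.restrictDegree σ K (p - 1), Φ f = a) :
    Subalgebra.center K A = ⊥ ∧ IsSimpleRing A ∧ Module.finrank K A = p ^ Fintype.card σ := by
  have hone := wq_one_mem p hp Φ h1 (fun s a => u s * a - a * u s) hδ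
  have hone' : ∀ (J : Set A), (∀ (c : K) a, a ∈ J → c • a ∈ J) →
      (∀ s a, a ∈ J → u s * a - a * u s ∈ J) →
      ∀ f ∈ MvPolynomial.restrictDegree σ K (p - 1), f ≠ 0 → Φ f ∈ J → (1 : A) ∈ J := by
    intro J hs hJ f hf hne hfJ
    refine hone J hs hJ (f.totalDegree + 1) f hf ?_ hne hfJ
    intro m hm
    have := MvPolynomial.le_totalDegree hm
    rw [Finsupp.degree_eq_sum]
    rw [Finsupp.sum_fintype _ _ (by simp)] at this
    omega
  have hinj : ∀ f ∈ MvPolynomial.restrictDegree σ K (p - 1), Φ f = 0 → f = 0 := by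
    intro f hf h0
    by_contra hne
    have := hone' {0} (by simp) (by simp) f hf hne h0
    simp at this
  refine ⟨?_, ⟨⟨?_⟩⟩, ?_⟩
  · rw [eq_bot_iff]
    intro z hz
    obtain ⟨f, hf, rfl⟩ := hsurj z
    rw [Subalgebra.mem_center_iff] at hz
    have := wq_const p hp f hf (fun s => hinj _ (wq_pderiv_restrict _ f hf s) (by
      rw [← hδ, hz (u s), sub_self]))
    rw [this, show (MvPolynomial.C (MvPolynomial.coeff 0 f) : MvPolynomial σ K)
      = (MvPolynomial.coeff 0 f) • 1 by
        rw [MvPolynomial.smul_eq_C_mul, mul_one], map_smul, h1, Algebra.mem_bot]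
    exact ⟨_, Algebra.algebraMap_eq_smul_one _⟩
  · intro I
    by_cases hI : I = ⊥
    · exact Or.inl hI
    right
    have : ∃ a ∈ I, a ≠ 0 := by
      by_contra! hh
      apply hI
      rw [eq_bot_iff]
      intro a ha
      rw [hh a ha]
      exact zero_mem _
    obtain ⟨a, ha, hne⟩ := this
    obtain ⟨f, hf, rfl⟩ := hsurj a
    have h1I : (1 : A) ∈ I := hone' (I : Set A)
      (fun c a ha => by rw [Algebra.smul_def]; exact I.mul_mem_left _ _ ha)
      (fun s a ha => I.sub_mem (I.mul_mem_left _ _ ha) (I.mul_mem_right _ _ ha)) f hf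
      (by rintro rfl; simp at hne) ha
    rw [eq_top_iff]
    intro b _
    simpa using I.mul_mem_left b 1 h1I
  · rw [← wq_finrank (K := K) (σ := σ) p hp]
    refine (LinearEquiv.finrank_eq (LinearEquiv.ofBijective
      (Φ.comp (MvPolynomial.restrictDegree σ K (p - 1)).subtype) ⟨?_, ?_⟩)).symm
    · rw [← LinearMap.ker_eq_bot, LinearMap.ker_eq_bot']
      rintro ⟨f, hf⟩ h0
      exact Subtype.ext (hinj f hf h0)
    · intro a
      obtain ⟨f, hf, rfl⟩ := hsurj a
      exact ⟨⟨f, hf⟩, rfl⟩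

open MvPolynomial in
/-- The core argument for any nonzero algebra generated by elements with the Weyl relations. -/
theorem wq_core {K A : Type*} [Field K] [Ring A] [Algebra K A] [Nontrivial A]
    (p : ℕ) (hp : p.Prime) [CharP K p] (d : ℕ) (a b : Fin d → K) (x y : Fin d → A)
    (hxx : ∀ i j, x i * x j = x j * x i) (hyy : ∀ i j, y i * y j = y j * y i)
    (hyx : ∀ i j, y i * x j = x j * y i + if i = j then 1 else 0)
    (hxp : ∀ i, x i ^ p = algebraMap K A (a i)) (hyp : ∀ i, y i ^ p = algebraMap K A (b i))
    (hgen : ∀ S : Submodule K A, 1 ∈ S → (∀ i, ∀ m ∈ S, x i * m ∈ S) →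
      (∀ i, ∀ m ∈ S, y i * m ∈ S) → S = ⊤) :
    Subalgebra.center K A = ⊥ ∧ IsSimpleRing A ∧ Module.finrank K A = p ^ (2 * d) := by
  classical
  obtain ⟨px, hpx⟩ := wq_exists_hom (K := K) x hxx
  obtain ⟨py, hpy⟩ := wq_exists_hom (K := K) y hyy
  have hdx : ∀ i f, y i * px f - px f * y i = px (pderiv i f) := by
    intro i f
    induction f using MvPolynomial.induction_on with
    | C c =>
      rw [pderiv_C, map_zero, ← algebraMap_eq, AlgHom.commutes, Algebra.commutes, sub_self]
    | add f g hf hg => rw [map_add, map_add, map_add, ← hf, ← hg]; noncomm_ring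
    | mul_X f j hf =>
      rw [pderiv_mul, map_add, map_mul, map_mul, map_mul, ← hf, hpx, pderiv_X]
      have e : px ((Pi.single i (1 : MvPolynomial (Fin d) K) : Fin d → MvPolynomial (Fin d) K) j) = y i * x j - x j * y i := by
        rw [hyx, Pi.single_apply]
        by_cases h : i = j
        · simp [h]
        · simp [h, Ne.symm h]
      rw [e]
      noncomm_ring
  have hdy : ∀ i f, (-x i) * py f - py f * (-x i) = py (pderiv i f) := by
    intro i f
    induction f using MvPolynomial.induction_on with
    | C c =>
      rw [pderiv_C, map_zero, ← algebraMap_eq, AlgHom.commutes, Algebra.commutes, sub_self]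
    | add f g hf hg => rw [map_add, map_add, map_add, ← hf, ← hg]; noncomm_ring
    | mul_X f j hf =>
      rw [pderiv_mul, map_add, map_mul, map_mul, map_mul, ← hf, hpy, pderiv_X]
      have e : py ((Pi.single i (1 : MvPolynomial (Fin d) K) : Fin d → MvPolynomial (Fin d) K) j) = y j * x i - x i * y j := by
        rw [hyx, Pi.single_apply]
        by_cases h : j = i
        · simp [h]
        · simp [h]
      rw [e]
      noncomm_ring
  have hcx : ∀ i f, x i * px f = px f * x i := by
    intro i f; rw [← hpx, ← map_mul, ← map_mul, mul_comm]
  have hcy : ∀ i f, y i * py f = py f * y i := by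
    intro i f; rw [← hpy, ← map_mul, ← map_mul, mul_comm]
  let l : (Fin d ⊕ Fin d →₀ ℕ) → (Fin d →₀ ℕ) := fun n => (Finsupp.sumFinsuppEquivProdFinsupp n).1
  let r : (Fin d ⊕ Fin d →₀ ℕ) → (Fin d →₀ ℕ) := fun n => (Finsupp.sumFinsuppEquivProdFinsupp n).2
  have hl : ∀ n i, l n i = n (Sum.inl i) := fun n i =>
    Finsupp.fst_sumFinsuppEquivProdFinsupp n i
  have hr : ∀ n i, r n i = n (Sum.inr i) := fun n i =>
    Finsupp.snd_sumFinsuppEquivProdFinsupp n i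
  have hl1 : ∀ n i k, l (n + Finsupp.single (Sum.inl i) k) = l n + Finsupp.single i k := by
    intro n i k; ext j; simp [hl, Finsupp.single_apply]
  have hl2 : ∀ n i k, l (n + Finsupp.single (Sum.inr i) k) = l n := by
    intro n i k; ext j; simp [hl]
  have hr1 : ∀ n i k, r (n + Finsupp.single (Sum.inr i) k) = r n + Finsupp.single i k := by
    intro n i k; ext j; simp [hr, Finsupp.single_apply]
  have hr2 : ∀ n i k, r (n + Finsupp.single (Sum.inl i) k) = r n := by
    intro n i k; ext j; simp [hr]
  have hl1' : ∀ n i k, l (n - Finsupp.single (Sum.inl i) k) = l n - Finsupp.single i k := by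
    intro n i k; ext j; simp [hl, Finsupp.single_apply]
  have hl2' : ∀ n i k, l (n - Finsupp.single (Sum.inr i) k) = l n := by
    intro n i k; ext j; simp [hl]
  have hr1' : ∀ n i k, r (n - Finsupp.single (Sum.inr i) k) = r n - Finsupp.single i k := by
    intro n i k; ext j; simp [hr, Finsupp.single_apply]
  have hr2' : ∀ n i k, r (n - Finsupp.single (Sum.inl i) k) = r n := by
    intro n i k; ext j; simp [hr]
  let M : (Fin d ⊕ Fin d →₀ ℕ) → A := fun n => px (monomial (l n) 1) * py (monomial (r n) 1)
  have hM : ∀ n, M n = px (monomial (l n) 1) * py (monomial (r n) 1) := fun n => rfl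
  have hmon : ∀ (m : Fin d →₀ ℕ) i k, (monomial (m + Finsupp.single i k) (1 : K)) =
      monomial m 1 * X i ^ k := by
    intro m i k
    rw [X_pow_eq_monomial, monomial_mul, mul_one]
  have hM0 : M 0 = 1 := by
    have h1 : l 0 = 0 := by ext i; simp [hl]
    have h2 : r 0 = 0 := by ext i; simp [hr]
    rw [hM, h1, h2, monomial_zero', map_one, map_one, map_one, mul_one]
  have hMx : ∀ n i k, M (n + Finsupp.single (Sum.inl i) k) = x i ^ k * M n := by
    intro n i k
    rw [hM, hM, hl1, hr2, hmon, mul_comm, map_mul, map_pow, hpx, mul_assoc]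
  have hMy : ∀ n i k, M (n + Finsupp.single (Sum.inr i) k) = M n * y i ^ k := by
    intro n i k
    rw [hM, hM, hl2, hr1, hmon, map_mul, map_pow, hpy, mul_assoc]
  have hmonc : ∀ (m : Fin d →₀ ℕ) (k : ℕ), (monomial m (1 * (k : K))) =
      (k : K) • monomial m 1 := by
    intro m k
    rw [smul_monomial, smul_eq_mul, mul_comm]
  have hMdx : ∀ n i, y i * M n - M n * y i =
      (n (Sum.inl i) : K) • M (n - Finsupp.single (Sum.inl i) 1) := by
    intro n i
    have : y i * M n - M n * y i = (y i * px (monomial (l n) 1) - px (monomial (l n) 1) * y i)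
        * py (monomial (r n) 1) := by
      rw [hM, sub_mul, mul_assoc, mul_assoc, mul_assoc, hcy]
    rw [this, hdx, pderiv_monomial, hmonc, map_smul, hM, hl1', hr2', hl, smul_mul_assoc]
  have hMdy : ∀ n i, (-x i) * M n - M n * (-x i) =
      (n (Sum.inr i) : K) • M (n - Finsupp.single (Sum.inr i) 1) := by
    intro n i
    have : (-x i) * M n - M n * (-x i) = px (monomial (l n) 1) *
        ((-x i) * py (monomial (r n) 1) - py (monomial (r n) 1) * (-x i)) := by
      rw [hM, mul_sub, ← mul_assoc, ← mul_assoc, ← mul_assoc, neg_mul, mul_neg, mul_neg, hcx]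
    rw [this, hdy, pderiv_monomial, hmonc, map_smul, hM, hl2', hr1', hr, mul_smul_comm]
  let Φ : MvPolynomial (Fin d ⊕ Fin d) K →ₗ[K] A := (basisMonomials (Fin d ⊕ Fin d) K).constr K M
  have hΦ : ∀ n, Φ (monomial n 1) = M n := by
    intro n
    have := (basisMonomials (Fin d ⊕ Fin d) K).constr_basis K M n
    simpa using this
  have hΦc : ∀ n c, Φ (monomial n c) = c • M n := by
    intro n c
    rw [← hΦ, ← map_smul, smul_monomial, smul_eq_mul, mul_one]
  -- reduction of exponents
  have hMred : ∀ N n, n.degree < N → M n ∈ (restrictDegree (Fin d ⊕ Fin d) K (p - 1)).map Φ := by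
    intro N
    induction N with
    | zero => intro n h; omega
    | succ N ih =>
      intro n hn
      by_cases h : ∀ s, n s ≤ p - 1
      · refine ⟨monomial n 1, ?_, hΦ n⟩
        exact (monomial_mem_restrictSupport (R := K)).mpr (Or.inl h)
      · push Not at h
        obtain ⟨s, hs⟩ := h
        have h2 : n = n - Finsupp.single s p + Finsupp.single s p := by
          ext t
          by_cases hst : s = t
          · subst hst; simp; omega
          · simp [hst]
        have hp0 := hp.pos
        have hdeg : (n - Finsupp.single s p).degree < N := by
          rw [h2, map_add, Finsupp.degree_single] at hn
          omega
        have := ih _ hdeg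
        rw [h2]
        rcases s with i | i
        · rw [hMx, hxp, ← Algebra.smul_def]
          exact Submodule.smul_mem _ _ this
        · rw [hMy, hyp, ← Algebra.commutes, ← Algebra.smul_def]
          exact Submodule.smul_mem _ _ this
  have hspan : Submodule.span K (Set.range M) = ⊤ := by
    have key : ∀ z : A, (∀ n, z * M n ∈ Submodule.span K (Set.range M)) →
        ∀ m ∈ Submodule.span K (Set.range M), z * m ∈ Submodule.span K (Set.range M) := by
      intro z hz m hm
      induction hm using Submodule.span_induction with
      | mem m h => obtain ⟨n, rfl⟩ := h; exact hz n
      | zero => simp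
      | add u v _ _ hu hv => rw [mul_add]; exact Submodule.add_mem _ hu hv
      | smul c u _ hu => rw [mul_smul_comm]; exact Submodule.smul_mem _ _ hu
    have hmem : ∀ n, M n ∈ Submodule.span K (Set.range M) := fun n =>
      Submodule.subset_span ⟨n, rfl⟩
    apply hgen
    · rw [← hM0]; exact hmem 0
    · intro i
      apply key
      intro n
      have := hMx n i 1
      rw [pow_one] at this
      rw [← this]
      exact hmem _
    · intro i
      apply key
      intro n
      have := hMy n i 1
      rw [pow_one] at this
      rw [sub_eq_iff_eq_add.mp (hMdx n i), ← this]
      exact Submodule.add_mem _ (Submodule.smul_mem _ _ (hmem _)) (hmem _)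
  have hsurj : ∀ z, ∃ f ∈ restrictDegree (Fin d ⊕ Fin d) K (p - 1), Φ f = z := by
    intro z
    have hle : Submodule.span K (Set.range M) ≤
        (restrictDegree (Fin d ⊕ Fin d) K (p - 1)).map Φ := by
      rw [Submodule.span_le]
      rintro _ ⟨n, rfl⟩
      exact hMred _ n (Nat.lt_succ_self _)
    rw [hspan] at hle
    exact hle (Submodule.mem_top (x := z))
  have := wq_abstract p hp Φ (by rw [← hM0, ← hΦ, monomial_zero', C_1])
    (Sum.elim y fun i => -x i) (by
      intro s f
      induction f using MvPolynomial.induction_on' with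
      | monomial n c =>
        rw [pderiv_monomial, hΦc, hΦc, mul_smul_comm, smul_mul_assoc, ← smul_sub]
        rcases s with i | i
        · rw [Sum.elim_inl, hMdx, smul_smul]
        · rw [Sum.elim_inr, hMdy, smul_smul]
      | add f g hf hg => rw [map_add, map_add, map_add, ← hf, ← hg]; noncomm_ring) hsurj
  rw [show 2 * d = Fintype.card (Fin d ⊕ Fin d) by simp [two_mul]]
  exact this

open MvPolynomial in
theorem wq_pderiv_pow {B σ : Type*} [Field B] (p : ℕ) (hp : p.Prime) [CharP B p] (i : σ) :
    ((pderiv i : Derivation B (MvPolynomial σ B) (MvPolynomial σ B)) :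
      MvPolynomial σ B →ₗ[B] MvPolynomial σ B) ^ p = 0 := by
  classical
  set D : MvPolynomial σ B →ₗ[B] MvPolynomial σ B := ((pderiv i : Derivation B (MvPolynomial σ B) (MvPolynomial σ B)) :
      MvPolynomial σ B →ₗ[B] MvPolynomial σ B) with hD
  have key : ∀ (k : ℕ) (m : σ →₀ ℕ) (c : B), (D ^ k) (monomial m c) =
      monomial (m - Finsupp.single i k) (c * ((m i).descFactorial k : B)) := by
    intro k
    induction k with
    | zero => intro m c; simp
    | succ k ih =>
      intro m c
      rw [pow_succ', Module.End.mul_apply, ih]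
      change pderiv i _ = _
      rw [pderiv_monomial, tsub_tsub, ← Finsupp.single_add, Nat.descFactorial_succ]
      simp only [Finsupp.tsub_apply, Finsupp.single_eq_same]
      rw [mul_assoc, ← Nat.cast_mul, mul_comm (Nat.descFactorial _ _)]
  ext m : 1
  ext1
  change (D ^ p) (monomial m 1) = 0
  rw [key, Nat.descFactorial_eq_factorial_mul_choose, Nat.cast_mul,
    (CharP.cast_eq_zero_iff B p _).mpr (hp.dvd_factorial.mpr le_rfl)]
  simp

open MvPolynomial in
theorem wq_pderiv_comm {B σ : Type*} [Field B] (i j : σ) (f : MvPolynomial σ B) :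
    pderiv i (pderiv j f) = pderiv j (pderiv i f) := by
  classical
  ext m
  simp only [coeff_pderiv]
  by_cases hij : i = j
  · subst hij; rfl
  · have hji : j ≠ i := Ne.symm hij
    simp only [Finsupp.add_apply, Finsupp.single_apply, hij, hji, if_false, add_right_comm m,
      add_zero]
    ring

set_option maxHeartbeats 1000000 in
open MvPolynomial in
/-- Existence of a nonzero representation of the relations. -/
theorem wq_exists_rep_aux.{u} {K B : Type u} [Field K] [Field B] [Algebra K B] (p : ℕ) (hp : p.Prime) [CharP K p] (d : ℕ)
    (hroot : ∀ c : K, ∃ β : B, β ^ p = algebraMap K B c)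
    (a b : Fin d → K) : ∃ (V : Type u) (_ : AddCommGroup V) (_ : Module K V)
      (x y : Fin d → Module.End K V), Nontrivial V ∧
      (∀ i j, x i * x j = x j * x i) ∧ (∀ i j, y i * y j = y j * y i) ∧
      (∀ i j, y i * x j = x j * y i + if i = j then 1 else 0) ∧
      (∀ i, x i ^ p = algebraMap K _ (a i)) ∧ (∀ i, y i ^ p = algebraMap K _ (b i)) := by
  classical
  haveI : Fact p.Prime := ⟨hp⟩
  haveI : CharP B p := charP_of_injective_algebraMap (algebraMap K B).injective p
  choose rt hrt using hroot
  let P := MvPolynomial (Fin d) B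
  let I : Ideal P := Ideal.span (Set.range fun i : Fin d => (X i ^ p - C (algebraMap K B (a i)) : P))
  let W : Submodule B P := I.restrictScalars B
  have hW : ∀ f, f ∈ W ↔ f ∈ I := fun f => Iff.rfl
  let T : Fin d → Module.End B P := fun i => LinearMap.mulLeft B (X i)
  let D : Fin d → Module.End B P := fun i =>
    ((pderiv i : Derivation B P P) : P →ₗ[B] P) + algebraMap B (Module.End B P) (rt (b i))
  have hT : ∀ i f, T i f = X i * f := fun i f => rfl
  have hD : ∀ i f, D i f = pderiv i f + rt (b i) • f := fun i f => rfl
  have hTW : ∀ i, W ≤ W.comap (T i) := fun i f hf => I.mul_mem_left _ hf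
  have hDW : ∀ i, W ≤ W.comap (D i) := by
    intro i f hf
    rw [Submodule.mem_comap, hD]
    refine W.add_mem ?_ (W.smul_mem _ hf)
    rw [hW] at hf ⊢
    induction hf using Submodule.span_induction with
    | mem f h =>
      obtain ⟨j, rfl⟩ := h
      have : pderiv i (X j ^ p - C (algebraMap K B (a j)) : P) = 0 := by
        rw [map_sub, pderiv_C, pderiv_pow, CharP.cast_eq_zero]
        simp
      rw [this]; exact zero_mem _
    | zero => simp
    | add f g _ _ hf hg => rw [map_add]; exact add_mem hf hg
    | smul c f hf' hf =>
      rw [smul_eq_mul, pderiv_mul]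
      exact add_mem (I.mul_mem_left _ hf') (I.mul_mem_left _ hf)
  have hDp : ∀ i, D i ^ p = algebraMap B (Module.End B P) (rt (b i) ^ p) := by
    intro i
    haveI : CharP (Module.End B P) p :=
      charP_of_injective_algebraMap (algebraMap B (Module.End B P)).injective p
    change (_ + _) ^ p = _
    rw [add_pow_char_of_commute _ (Algebra.commutes _ _).symm, wq_pderiv_pow p hp, zero_add, map_pow]
  let x : Fin d → Module.End B (P ⧸ W) := fun i => W.mapQ W (T i) (hTW i)
  let y : Fin d → Module.End B (P ⧸ W) := fun i => W.mapQ W (D i) (hDW i)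
  have hx : ∀ i f, x i (W.mkQ f) = W.mkQ (T i f) := fun i f => rfl
  have hy : ∀ i f, y i (W.mkQ f) = W.mkQ (D i f) := fun i f => rfl
  have hxk : ∀ i k f, (x i ^ k) (W.mkQ f) = W.mkQ ((T i ^ k) f) := by
    intro i k
    induction k with
    | zero => intro f; rfl
    | succ k ih => intro f; rw [pow_succ, pow_succ, Module.End.mul_apply, hx, ih]; rfl
  have hyk : ∀ i k f, (y i ^ k) (W.mkQ f) = W.mkQ ((D i ^ k) f) := by
    intro i k
    induction k with
    | zero => intro f; rfl
    | succ k ih => intro f; rw [pow_succ, pow_succ, Module.End.mul_apply, hy, ih]; rfl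
  have hTk : ∀ i k f, (T i ^ k) f = X i ^ k * f := by
    intro i k
    induction k with
    | zero => intro f; simp
    | succ k ih => intro f; rw [pow_succ, Module.End.mul_apply, ih, hT, pow_succ, mul_assoc]
  have hsm : ∀ (c : K) (v : P ⧸ W), c • v = algebraMap K B c • v := fun c v => (algebraMap_smul B c v).symm
  let res : Module.End B (P ⧸ W) → Module.End K (P ⧸ W) := fun f =>
    { toFun := f
      map_add' := fun u v => map_add f u v
      map_smul' := fun c v => by rw [hsm, hsm, f.map_smul]; rfl }
  have hres : ∀ f v, res f v = f v := fun f v => rfl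
  have hresk : ∀ f k v, (res f ^ k) v = (f ^ k) v := by
    intro f k
    induction k with
    | zero => intro f; rfl
    | succ k ih => intro f; rw [pow_succ, pow_succ, Module.End.mul_apply, hres, ih]; rfl
  refine ⟨P ⧸ W, inferInstance, inferInstance, fun i => res (x i), fun i => res (y i), ?_, ?_, ?_, ?_, ?_, ?_⟩
  · rw [Submodule.Quotient.nontrivial_iff]
    intro htop
    have h1 : (1 : P) ∈ I := by rw [← hW, htop]; trivial
    have hle : I ≤ RingHom.ker (aeval (fun i => rt (a i)) : P →ₐ[B] B) := by
      rw [Ideal.span_le]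
      rintro _ ⟨i, rfl⟩
      change aeval (fun i => rt (a i)) (X i ^ p - C (algebraMap K B (a i)) : P) = 0
      rw [map_sub, map_pow, aeval_X, hrt, aeval_C, Algebra.algebraMap_self, RingHom.id_apply, sub_self]
    have := hle h1
    rw [RingHom.mem_ker, map_one] at this
    exact one_ne_zero this
  · intro i j
    refine LinearMap.ext fun v => ?_
    obtain ⟨f, rfl⟩ := W.mkQ_surjective v
    simp only [Module.End.mul_apply, hres, hx, hT]
    rw [mul_left_comm]
  · intro i j
    refine LinearMap.ext fun v => ?_
    obtain ⟨f, rfl⟩ := W.mkQ_surjective v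
    simp only [Module.End.mul_apply, hres, hy, hD]
    have hDD : pderiv i (pderiv j f + rt (b j) • f) + rt (b i) • (pderiv j f + rt (b j) • f) =
        pderiv j (pderiv i f + rt (b i) • f) + rt (b j) • (pderiv i f + rt (b i) • f) := by
      simp only [map_add, Derivation.map_smul, smul_add, wq_pderiv_comm i j f, smul_smul]
      rw [mul_comm (rt (b i))]
      abel
    rw [hDD]
  · intro i j
    refine LinearMap.ext fun v => ?_
    obtain ⟨f, rfl⟩ := W.mkQ_surjective v
    have h1 : D i (T j f) = T j (D i f) + if i = j then f else 0 := by
      simp only [hD, hT, pderiv_mul, pderiv_X, Pi.single_apply]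
      by_cases hij : i = j
      · subst hij
        simp [mul_add]
        ring
      · simp [hij, Ne.symm hij, mul_add]
    rw [LinearMap.add_apply]
    simp only [Module.End.mul_apply, hres, hy, hx]
    rw [h1, map_add]
    by_cases hij : i = j
    · simp [hij]
    · simp [hij]
  · intro i
    refine LinearMap.ext fun v => ?_
    obtain ⟨f, rfl⟩ := W.mkQ_surjective v
    rw [hresk, hxk, hTk, Module.algebraMap_end_apply, hsm, ← map_smul, ← sub_eq_zero, ← map_sub,
      Submodule.mkQ_apply, Submodule.Quotient.mk_eq_zero, hW, smul_eq_C_mul, ← sub_mul]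
    exact I.mul_mem_right _ (Ideal.subset_span ⟨i, rfl⟩)
  · intro i
    refine LinearMap.ext fun v => ?_
    obtain ⟨f, rfl⟩ := W.mkQ_surjective v
    rw [hresk, hyk, hDp, Module.algebraMap_end_apply, Module.algebraMap_end_apply, hsm, ← map_smul,
      hrt]

theorem wq_exists_rep.{u} {K : Type u} [Field K] (p : ℕ) (hp : p.Prime) [CharP K p] (d : ℕ)
    (a b : Fin d → K) : ∃ (V : Type u) (_ : AddCommGroup V) (_ : Module K V)
      (x y : Fin d → Module.End K V), Nontrivial V ∧
      (∀ i j, x i * x j = x j * x i) ∧ (∀ i j, y i * y j = y j * y i) ∧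
      (∀ i j, y i * x j = x j * y i + if i = j then 1 else 0) ∧
      (∀ i, x i ^ p = algebraMap K _ (a i)) ∧ (∀ i, y i ^ p = algebraMap K _ (b i)) :=
  wq_exists_rep_aux (B := AlgebraicClosure K) p hp d
    (fun _ => IsAlgClosed.exists_pow_nat_eq _ hp.pos) a b

/-- In characteristic `p`, the quotient of the Weyl algebra `W_d(K)` by the two-sided ideal
generated by `t_i^p − a_i` and `∂_i^p − b_i` is a central simple `K`-algebra of dimension
`p^{2d}`: its center is `K·1`, it is a simple ring, and its `K`-dimension is `p^{2d}`. -/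
theorem weylAlgebra_quotient_central_simple (p : ℕ) (hp : p.Prime)
    (K : Type*) [Field K] (hchar : (p : K) = 0) (d : ℕ) (hd : 1 ≤ d)
    (a b : Fin d → K) :
    Subalgebra.center K (RingQuot (WeylCentralRel K d p a b)) = ⊥ ∧
    IsSimpleRing (RingQuot (WeylCentralRel K d p a b)) ∧
    Module.finrank K (RingQuot (WeylCentralRel K d p a b)) = p ^ (2 * d) := by
  haveI : CharP K p := by
    obtain ⟨q, hq⟩ := CharP.exists K
    have hdvd : q ∣ p := (CharP.cast_eq_zero_iff K q p).mp hchar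
    rcases (Nat.dvd_prime hp).mp hdvd with h | h
    · exact absurd h (CharP.char_ne_one K q)
    · exact h ▸ hq
  let π := RingQuot.mkAlgHom K (WeylCentralRel K d p a b)
  let ρ := RingQuot.mkAlgHom K (WeylRel K d)
  have hne : Nontrivial (RingQuot (WeylCentralRel K d p a b)) := by
    obtain ⟨V, i1, i2, x, y, hV, hxx, hyy, hyx, hxp, hyp⟩ := wq_exists_rep p hp d a b
    let f0 : FreeAlgebra K (Fin d ⊕ Fin d) →ₐ[K] Module.End K V := FreeAlgebra.lift K (Sum.elim x y)
    have hf0 : ∀ s, f0 (FreeAlgebra.ι K s) = Sum.elim x y s := fun s =>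
      FreeAlgebra.lift_ι_apply _ _
    let f1 : WeylAlgebra K d →ₐ[K] Module.End K V := RingQuot.liftAlgHom K ⟨f0, by
      intro u v huv
      cases huv with
      | tt i j => simpa [hf0] using hxx i j
      | dd i j => simpa [hf0] using hyy i j
      | dt i j =>
        rw [map_mul, map_add, map_mul, hf0, hf0, apply_ite f0, map_one, map_zero]
        exact hyx i j⟩
    have hf1 : ∀ u, f1 (ρ u) = f0 u := fun u => RingQuot.liftAlgHom_mkAlgHom_apply _ _ _ _
    let f2 : RingQuot (WeylCentralRel K d p a b) →ₐ[K] Module.End K V := RingQuot.liftAlgHom K ⟨f1, by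
      intro u v huv
      cases huv with
      | t i =>
        rw [map_pow, AlgHom.commutes, WeylAlgebra.t]
        erw [hf1]
        rw [hf0]
        exact hxp i
      | del i =>
        rw [map_pow, AlgHom.commutes, WeylAlgebra.del]
        erw [hf1]
        rw [hf0]
        exact hyp i⟩
    exact f2.toRingHom.domain_nontrivial
  have hrel : ∀ u v, WeylRel K d u v → π (ρ u) = π (ρ v) := fun u v h => by
    rw [show ρ u = ρ v from RingQuot.mkAlgHom_rel K h]
  refine wq_core p hp d a b (fun i => π (WeylAlgebra.t K d i)) (fun i => π (WeylAlgebra.del K d i))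
    ?_ ?_ ?_ ?_ ?_ ?_
  · intro i j
    have := hrel _ _ (WeylRel.tt i j)
    rw [map_mul, map_mul, map_mul, map_mul] at this
    exact this
  · intro i j
    have := hrel _ _ (WeylRel.dd i j)
    rw [map_mul, map_mul, map_mul, map_mul] at this
    exact this
  · intro i j
    have := hrel _ _ (WeylRel.dt i j)
    rw [map_mul, map_mul, map_add, map_add, map_mul, map_mul, apply_ite ρ, apply_ite π, map_one,
      map_one, map_zero, map_zero] at this
    exact this
  · intro i
    rw [← map_pow, ← AlgHom.commutes π]
    exact RingQuot.mkAlgHom_rel K (WeylCentralRel.t i)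
  · intro i
    rw [← map_pow, ← AlgHom.commutes π]
    exact RingQuot.mkAlgHom_rel K (WeylCentralRel.del i)
  · intro S h1 hx hy
    have key : ∀ u : FreeAlgebra K (Fin d ⊕ Fin d), ∀ m ∈ S, π (ρ u) * m ∈ S := by
      intro u
      induction u using FreeAlgebra.induction with
      | grade0 c =>
        intro m hm
        rw [AlgHom.commutes, AlgHom.commutes, ← Algebra.smul_def]
        exact S.smul_mem _ hm
      | grade1 s =>
        intro m hm
        rcases s with i | i
        · exact hx i m hm
        · exact hy i m hm
      | mul u v hu hv =>
        intro m hm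
        rw [map_mul, map_mul, mul_assoc]
        exact hu _ (hv _ hm)
      | add u v hu hv =>
        intro m hm
        rw [map_add, map_add, add_mul]
        exact S.add_mem (hu _ hm) (hv _ hm)
    rw [eq_top_iff]
    intro z _
    obtain ⟨w, rfl⟩ := RingQuot.mkAlgHom_surjective K (WeylCentralRel K d p a b) z
    obtain ⟨u, rfl⟩ := RingQuot.mkAlgHom_surjective K (WeylRel K d) w
    simpa using key u 1 h1
end
end

section
/- Let p be a prime and k a commutative ring with p·1 = 0, and let W = W_d(k) be the d-th Weyl algebra over k (d ≥ 1), with center Z. Then W is an Azumaya algebra over Z: W is a faithful, finitely generated projective Z-module, and the natural Z-algebra map W ⊗_Z W^op → End_Z(W), sending δ ⊗ δ' to the Z-linear endomorphism x ↦ δ·x·δ', is bijective. -/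
noncomputable section

set_option synthInstance.maxHeartbeats 1000000
set_option maxHeartbeats 1600000
open scoped TensorProduct

namespace WeylAlgebra

variable (k : Type*) [CommRing k] (d : ℕ)

private lemma central_rotate {W : Type*} [Ring W] {c : W} (hc : ∀ g : W, g * c = c * g)
    (u v : W) : u * (v * c) = c * (u * v) := by
  rw [hc v, ← mul_assoc, hc u, mul_assoc]

private lemma central_rotate' {W : Type*} [Ring W] {c : W} (hc : ∀ g : W, g * c = c * g)
    (u v : W) : u * (c * v) = c * (u * v) := by
  rw [← mul_assoc, hc u, mul_assoc]

/-- The natural map `W ⊗_Z W^op → End_Z(W)`, `δ ⊗ δ' ↦ (x ↦ δ·x·δ')`, for the Weyl algebra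
`W` over its center `Z`. -/
def azumayaMap :
    (WeylAlgebra k d) ⊗[Subring.center (WeylAlgebra k d)] (WeylAlgebra k d)ᵐᵒᵖ
      →ₗ[Subring.center (WeylAlgebra k d)]
        Module.End (Subring.center (WeylAlgebra k d)) (WeylAlgebra k d) :=
  TensorProduct.lift
    { toFun := fun w =>
        { toFun := fun w' =>
            (LinearMap.mulRight (Subring.center (WeylAlgebra k d)) w'.unop).comp
              (LinearMap.mulLeft (Subring.center (WeylAlgebra k d)) w)
          map_add' := fun a b => by
            ext x
            simp [mul_add]
          map_smul' := fun z a => by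
            ext x
            have hc : ∀ g : WeylAlgebra k d,
                g * algebraMap (Subring.center (WeylAlgebra k d)) (WeylAlgebra k d) z =
                  algebraMap (Subring.center (WeylAlgebra k d)) (WeylAlgebra k d) z * g :=
              fun g => (Algebra.commutes z g).symm
            simp [Algebra.smul_def, mul_assoc, central_rotate hc, central_rotate' hc] }
      map_add' := fun a b => by
        ext x
        simp [add_mul]
      map_smul' := fun z a => by
        ext x
        have hc : ∀ g : WeylAlgebra k d,
            g * algebraMap (Subring.center (WeylAlgebra k d)) (WeylAlgebra k d) z =
              algebraMap (Subring.center (WeylAlgebra k d)) (WeylAlgebra k d) z * g :=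
          fun g => (Algebra.commutes z g).symm
        simp [Algebra.smul_def, mul_assoc, central_rotate hc, central_rotate' hc] }

end WeylAlgebra

namespace WeylAux

section
variable {W : Type*} [Ring W]

lemma inv_factorial {p : ℕ} (hp : p.Prime) (hpW : (p : W) = 0) {m : ℕ} (hm : m < p) :
    ∃ u : ℤ, (u : W) * ((m.factorial : ℕ) : W) = 1 := by
  have hc : Nat.Coprime m.factorial p :=
    (Nat.Coprime.symm ((Nat.Prime.coprime_iff_not_dvd hp).2
      (fun h => absurd ((Nat.Prime.dvd_factorial hp).1 h) (by omega))))
  obtain ⟨a, b, hab⟩ := Nat.isCoprime_iff_coprime.2 hc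
  refine ⟨a, ?_⟩
  have h := congrArg (Int.cast : ℤ → W) hab
  push_cast at h
  rwa [hpW, mul_zero, add_zero] at h

/-- The commutator with `y`, as an endomorphism over the center. -/
def adE (y : W) : Module.End (Subring.center W) W :=
  LinearMap.mulLeft (Subring.center W) y - LinearMap.mulRight (Subring.center W) y

lemma adE_apply (y w : W) : adE y w = y * w - w * y := rfl

lemma adE_mul (y a b : W) : adE y (a * b) = adE y a * b + a * adE y b := by
  simp only [adE_apply]; noncomm_ring

lemma adE_pow_succ {x y : W} (h : adE y x = 1) (n : ℕ) :
    adE y (x ^ (n + 1)) = (n + 1 : ℕ) • x ^ n := by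
  induction n with
  | zero => simpa using h
  | succ n ih =>
    rw [pow_succ, adE_mul, ih, h, smul_mul_assoc, ← pow_succ, mul_one, succ_nsmul _ (n + 1)]

lemma adE_iter {x y a : W} (h : adE y x = 1) (ha : adE y a = 0) (m : ℕ) :
    (adE y ^ m) (x ^ m * a) = m.factorial • a := by
  induction m with
  | zero => simp
  | succ m ih =>
    rw [pow_succ, Module.End.mul_apply, adE_mul, adE_pow_succ h, ha, mul_zero, add_zero,
      smul_mul_assoc, map_nsmul, ih, smul_smul, Nat.factorial_succ]

lemma adE_iter_lt {x y a : W} (h : adE y x = 1) (ha : adE y a = 0) {j m : ℕ} (hj : j < m) :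
    (adE y ^ m) (x ^ j * a) = 0 := by
  obtain ⟨r, rfl⟩ : ∃ r, m = (r + 1) + j := ⟨m - j - 1, by omega⟩
  rw [pow_add, Module.End.mul_apply, adE_iter h ha, map_nsmul, pow_succ, Module.End.mul_apply, ha,
    map_zero, smul_zero]

lemma adE_pow_prime {p : ℕ} (hp : p.Prime) (hpW : (p : W) = 0) {y : W}
    (hy : y ^ p ∈ Subring.center W) : adE y ^ p = 0 := by
  have hL : adE y + LinearMap.mulRight (Subring.center W) y
      = LinearMap.mulLeft (Subring.center W) y := by simp [adE]
  have hcomm : Commute (adE y) (LinearMap.mulRight (Subring.center W) y) := by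
    ext w
    simp only [Module.End.mul_apply, adE_apply, LinearMap.mulRight_apply]
    noncomm_ring
  obtain ⟨r, hr⟩ := hcomm.exists_add_pow_prime_eq hp
  have hp0 : ((p : ℕ) : Module.End (Subring.center W) W) = 0 := by
    ext w
    rw [← nsmul_one p]
    simp [hpW]
  rw [hL, hp0] at hr
  ext w
  have := LinearMap.congr_fun hr w
  simp only [LinearMap.pow_mulLeft, LinearMap.pow_mulRight, LinearMap.add_apply,
    LinearMap.mulLeft_apply, LinearMap.mulRight_apply, zero_mul, LinearMap.zero_apply,
    add_zero] at this
  rw [← (Subring.mem_center_iff.1 hy w)] at this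
  simpa using this

lemma step {p : ℕ} (hp : p.Prime) (hpW : (p : W) = 0) {x y : W} (h : adE y x = 1) (n : ℕ)
    (hn : n ≤ p) :
    ∃ q : ℕ → Module.End (Subring.center W) W,
      (∀ j, q j ∈ Algebra.adjoin ℤ {adE y, LinearMap.mulLeft (Subring.center W) x}) ∧
      (∀ w, (adE y ^ n) w = 0 →
        (∀ j, adE y (q j w) = 0) ∧ ∑ j ∈ Finset.range n, x ^ j * q j w = w) ∧
      (∀ a : ℕ → W, (∀ j, adE y (a j) = 0) → ∀ m < n,
        q m (∑ j ∈ Finset.range n, x ^ j * a j) = a m) := by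
  induction n with
  | zero =>
    refine ⟨fun _ => 0, fun _ => Subalgebra.zero_mem _, ?_, ?_⟩
    · intro w hw
      simp at hw
      simp [hw]
    · intro a _ m hm
      omega
  | succ n ih =>
    obtain ⟨q, hqA, hq1, hq2⟩ := ih (by omega)
    obtain ⟨u, hu⟩ := inv_factorial (W := W) hp hpW (m := n) (by omega)
    set S := Algebra.adjoin ℤ {adE y, LinearMap.mulLeft (Subring.center W) x} with hS
    have hD : adE y ∈ S := Algebra.subset_adjoin (by simp)
    have hX : LinearMap.mulLeft (Subring.center W) x ∈ S := Algebra.subset_adjoin (by simp)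
    let top : Module.End (Subring.center W) W := u • (adE y ^ n)
    let low : Module.End (Subring.center W) W :=
      1 - LinearMap.mulLeft (Subring.center W) x ^ n * top
    have htop : top ∈ S := S.smul_mem (S.pow_mem hD n) u
    have hlow : low ∈ S := S.sub_mem S.one_mem (S.mul_mem (S.pow_mem hX n) htop)
    have hlow_apply : ∀ w, low w = w - x ^ n * top w := by
      intro w
      simp [low]
    have hufac : ∀ a : W, u • (n.factorial • a) = a := by
      intro a
      rw [zsmul_eq_mul, nsmul_eq_mul, ← mul_assoc, hu, one_mul]
    have htop_iter : ∀ a, adE y a = 0 → top (x ^ n * a) = a := by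
      intro a ha
      show u • ((adE y ^ n) (x ^ n * a)) = a
      rw [adE_iter h ha, hufac]
    refine ⟨fun j => if j = n then top else q j * low, ?_, ?_, ?_⟩
    · intro j
      dsimp only
      split_ifs
      · exact htop
      · exact S.mul_mem (hqA j) hlow
    · intro w hw
      have hDtop : adE y (top w) = 0 := by
        show adE y (u • ((adE y ^ n) w)) = 0
        rw [map_zsmul, ← Module.End.mul_apply, ← pow_succ', hw, smul_zero]
      have hlw : (adE y ^ n) (low w) = 0 := by
        rw [hlow_apply, map_sub, adE_iter h hDtop]
        show _ - n.factorial • (u • ((adE y ^ n) w)) = 0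
        rw [smul_comm, hufac, sub_self]
      obtain ⟨h1, h2⟩ := hq1 _ hlw
      constructor
      · intro j
        dsimp only
        split_ifs
        · exact hDtop
        · exact h1 j
      · rw [Finset.sum_range_succ]
        have : ∑ j ∈ Finset.range n, x ^ j * (if j = n then top else q j * low) w = low w := by
          rw [← h2]
          refine Finset.sum_congr rfl fun j hj => ?_
          rw [if_neg (by have := Finset.mem_range.1 hj; omega)]
          rfl
        refine (congrArg (· + _) this).trans ?_
        dsimp only
        rw [if_pos rfl, hlow_apply]
        abel
    · intro a ha m hm
      have htopa : top (∑ j ∈ Finset.range (n + 1), x ^ j * a j) = a n := by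
        rw [Finset.sum_range_succ, map_add, htop_iter _ (ha n), map_sum, Finset.sum_eq_zero,
          zero_add]
        intro j hj
        show u • ((adE y ^ n) (x ^ j * a j)) = 0
        rw [adE_iter_lt h (ha j) (Finset.mem_range.1 hj), smul_zero]
      dsimp only
      split_ifs with hmn
      · rw [htopa, hmn]
      · rw [Module.End.mul_apply, hlow_apply, htopa, Finset.sum_range_succ, add_sub_cancel_right]
        exact hq2 a ha m (by omega)

/-- The image of `W ⊗ Wᵐᵒᵖ` in the endomorphisms. -/
abbrev imA (W : Type*) [Ring W] : Subalgebra (Subring.center W) (Module.End (Subring.center W) W) :=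
  (AlgHom.mulLeftRight (Subring.center W) W).range

lemma mulLeft_mem (x : W) : LinearMap.mulLeft (Subring.center W) x ∈ imA W :=
  ⟨x ⊗ₜ 1, by ext; simp [AlgHom.mulLeftRight_apply]⟩

lemma mulRight_mem (x : W) : LinearMap.mulRight (Subring.center W) x ∈ imA W :=
  ⟨1 ⊗ₜ MulOpposite.op x, by ext; simp [AlgHom.mulLeftRight_apply]⟩

lemma adE_mem (y : W) : adE y ∈ imA W := (imA W).sub_mem (mulLeft_mem y) (mulRight_mem y)

lemma adjoin_mem {x y : W} {f : Module.End (Subring.center W) W}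
    (hf : f ∈ Algebra.adjoin ℤ {adE y, LinearMap.mulLeft (Subring.center W) x}) :
    f ∈ imA W := by
  have : Algebra.adjoin ℤ {adE y, LinearMap.mulLeft (Subring.center W) x}
      ≤ subalgebraOfSubring (imA W).toSubring := by
    refine Algebra.adjoin_le ?_
    rintro _ (rfl | rfl)
    · exact adE_mem y
    · exact mulLeft_mem x
  exact this hf

lemma adjoin_comm {x y z : W} (hyz : y * z - z * y ∈ Subring.center W) (hxz : adE z x = 0)
    {f : Module.End (Subring.center W) W}
    (hf : f ∈ Algebra.adjoin ℤ {adE y, LinearMap.mulLeft (Subring.center W) x}) :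
    adE z * f = f * adE z := by
  have : Algebra.adjoin ℤ {adE y, LinearMap.mulLeft (Subring.center W) x}
      ≤ Subalgebra.centralizer ℤ {adE z} := by
    refine Algebra.adjoin_le ?_
    rintro _ (rfl | rfl)
    · rintro _ rfl
      ext w
      have h := Subring.mem_center_iff.1 hyz w
      simp only [Module.End.mul_apply, adE_apply]
      rw [← sub_eq_zero] at h ⊢
      rw [← h]
      noncomm_ring
    · rintro _ rfl
      ext w
      simp only [Module.End.mul_apply, LinearMap.mulLeft_apply, adE_mul, hxz, zero_mul, zero_add]
  exact this hf _ rfl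

lemma decomp {p : ℕ} (hp : p.Prime) (hpW : (p : W) = 0) {ι : Type} [DecidableEq ι]
    (x y : ι → W) (hxy : ∀ i j, adE (y i) (x j) = if i = j then 1 else 0)
    (hyy : ∀ i j, y i * y j - y j * y i ∈ Subring.center W)
    (hyp : ∀ i, y i ^ p ∈ Subring.center W) (s : Finset ι) :
    ∃ (n : Type) (_ : Fintype n) (b : n → W) (c : n → Module.End (Subring.center W) W),
      (∀ g, c g ∈ imA W) ∧
      (∀ w, (∀ g, ∀ i ∈ s, adE (y i) (c g w) = 0) ∧ ∑ g, b g * c g w = w) ∧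
      (∀ a : n → W, (∀ g, ∀ i ∈ s, adE (y i) (a g) = 0) → ∀ g, c g (∑ j, b j * a j) = a g) := by
  induction s using Finset.induction_on with
  | empty =>
    refine ⟨Unit, inferInstance, fun _ => 1, fun _ => 1, fun _ => (imA W).one_mem, ?_, ?_⟩
    · intro w; simp
    · intro a _ g; simp
  | insert i s his ih =>
    obtain ⟨n, _, b, c, hcA, hc1, hc2⟩ := ih
    obtain ⟨q, hqA, hq1, hq2⟩ := step hp hpW (x := x i) (y := y i) (by simp [hxy]) p le_rfl
    have hcomm : ∀ k ∈ s, ∀ j w, adE (y k) (q j w) = q j (adE (y k) w) := by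
      intro k hk j w
      have hki : k ≠ i := fun h => his (h ▸ hk)
      exact LinearMap.congr_fun
        (adjoin_comm (hyy i k) (by simp [hxy, hki]) (hqA j)) w
    have hxs : ∀ k ∈ s, ∀ j : ℕ, adE (y k) (x i ^ j) = 0 := by
      intro k hk j
      have hki : k ≠ i := fun h => his (h ▸ hk)
      induction j with
      | zero => simp [adE_apply]
      | succ j ihj => rw [pow_succ, adE_mul, ihj, hxy, if_neg hki]; simp
    refine ⟨n × Fin p, inferInstance, fun g => b g.1 * x i ^ (g.2 : ℕ),
      fun g => q g.2 * c g.1, fun g => (imA W).mul_mem (adjoin_mem (hqA _)) (hcA _), ?_, ?_⟩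
    · intro w
      have hD : ∀ v, (adE (y i) ^ p) v = 0 := fun v => by
        rw [adE_pow_prime hp hpW (hyp i)]; rfl
      constructor
      · intro g k hk
        rw [Module.End.mul_apply]
        rcases Finset.mem_insert.1 hk with rfl | hk
        · exact (hq1 _ (hD _)).1 _
        · rw [hcomm k hk, (hc1 w).1 _ k hk, map_zero]
      · rw [Fintype.sum_prod_type]
        conv_rhs => rw [← (hc1 w).2]
        refine Finset.sum_congr rfl fun g _ => ?_
        conv_rhs => rw [← (hq1 (c g w) (hD _)).2]
        rw [Finset.mul_sum, ← Fin.sum_univ_eq_sum_range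
          (fun j => b g * (x i ^ j * q j (c g w))) p]
        simp [mul_assoc]
    · intro a ha g
      let a' : n → ℕ → W := fun g j => if h : j < p then a (g, ⟨j, h⟩) else 0
      have ha' : ∀ g j, ∀ k ∈ insert i s, adE (y k) (a' g j) = 0 := by
        intro g j k hk
        simp only [a']
        split_ifs
        · exact ha _ k hk
        · simp
      have hsum : ∑ j : n × Fin p, b j.1 * x i ^ (j.2 : ℕ) * a j
          = ∑ g, b g * ∑ j ∈ Finset.range p, x i ^ j * a' g j := by
        rw [Fintype.sum_prod_type]
        refine Finset.sum_congr rfl fun g _ => ?_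
        rw [Finset.mul_sum, ← Fin.sum_univ_eq_sum_range (fun j => b g * (x i ^ j * a' g j)) p]
        simp [a', mul_assoc]
      rw [hsum, Module.End.mul_apply, hc2 (fun g => ∑ j ∈ Finset.range p, x i ^ j * a' g j)]
      · rw [hq2 _ (fun j => ha' g.1 j i (Finset.mem_insert_self _ _)) g.2 g.2.2]
        simp [a']
      · intro g k hk
        rw [map_sum]
        refine Finset.sum_eq_zero fun j _ => ?_
        rw [adE_mul, hxs k hk, ha' g j k (Finset.mem_insert_of_mem hk)]
        simp

lemma abstract_azumaya {p : ℕ} (hp : p.Prime) (hpW : (p : W) = 0) {ι : Type} [DecidableEq ι]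
    [Fintype ι]
    (x y : ι → W) (hxy : ∀ i j, adE (y i) (x j) = if i = j then 1 else 0)
    (hyy : ∀ i j, y i * y j - y j * y i ∈ Subring.center W)
    (hyp : ∀ i, y i ^ p ∈ Subring.center W)
    (hZ : ∀ w, (∀ i, adE (y i) w = 0) → w ∈ Subring.center W) :
    Module.Finite (Subring.center W) W ∧ Module.Free (Subring.center W) W ∧
    Function.Bijective (AlgHom.mulLeftRight (Subring.center W) W) := by
  classical
  obtain ⟨n, _, b, c, hcA, hc1, hc2⟩ := decomp hp hpW x y hxy hyy hyp Finset.univ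
  have hcZ : ∀ g w, c g w ∈ Subring.center W := fun g w =>
    hZ _ fun i => (hc1 w).1 g i (Finset.mem_univ _)
  have hcen : ∀ (z : Subring.center W) (w : W), z • w = w * (z : W) := fun z w => by
    rw [Subring.smul_def, smul_eq_mul, (Subring.mem_center_iff.1 z.2 w)]
  let e : W ≃ₗ[Subring.center W] (n → Subring.center W) :=
    { toFun := fun w g => ⟨c g w, hcZ g w⟩
      map_add' := fun v w => by ext g; simp
      map_smul' := fun z w => by ext g; exact (c g).map_smul z w
      invFun := fun a => ∑ g, b g * (a g : W)
      left_inv := fun w => (hc1 w).2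
      right_inv := fun a => by
        ext g
        refine hc2 (fun g => (a g : W)) (fun g i _ => ?_) g
        rw [adE_apply, Subring.mem_center_iff.1 (a g).2, sub_self] }
  let B : Module.Basis n (Subring.center W) W := Module.Basis.ofEquivFun e
  have hfin : Module.Finite (Subring.center W) W := Module.Finite.of_basis B
  have hfree : Module.Free (Subring.center W) W := Module.Free.of_basis B
  refine ⟨hfin, hfree, ?_⟩
  have hsurj : Function.Surjective (AlgHom.mulLeftRight (Subring.center W) W) := by
    intro f
    have hf : f = ∑ g, LinearMap.mulLeft (Subring.center W) (f (b g)) * c g := by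
      ext w
      conv_lhs => rw [← (hc1 w).2]
      rw [map_sum, LinearMap.sum_apply]
      refine Finset.sum_congr rfl fun g _ => ?_
      have h1 := hcen ⟨c g w, hcZ g w⟩ (b g)
      have h2 := hcen ⟨c g w, hcZ g w⟩ (f (b g))
      dsimp only at h1 h2
      rw [← h1, map_smul, h2]
      rfl
    have : f ∈ imA W := by
      rw [hf]
      exact (imA W).sum_mem fun g _ => (imA W).mul_mem (mulLeft_mem _) (hcA g)
    exact this
  refine ⟨?_, hsurj⟩
  let Bo : Module.Basis n (Subring.center W) Wᵐᵒᵖ := B.map (MulOpposite.opLinearEquiv _)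
  let E : Module.End (Subring.center W) W ≃ₗ[Subring.center W] (W ⊗[Subring.center W] Wᵐᵒᵖ) :=
    (LinearMap.toMatrix B B).trans ((Matrix.stdBasis (Subring.center W) n n).equiv
      (B.tensorProduct Bo) (Equiv.refl _))
  have : Module.Finite (Subring.center W) (W ⊗[Subring.center W] Wᵐᵒᵖ) :=
    Module.Finite.of_basis (B.tensorProduct Bo)
  have hinj := OrzechProperty.injective_of_surjective_endomorphism
    (E.toLinearMap ∘ₗ (AlgHom.mulLeftRight (Subring.center W) W).toLinearMap)
    (E.surjective.comp hsurj)
  intro u v huv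
  exact hinj (congrArg E huv)

end

section
variable (k : Type*) [CommRing k] (d : ℕ)
open WeylAlgebra

lemma tt (i j : Fin d) : t k d i * t k d j = t k d j * t k d i := by
  have := RingQuot.mkAlgHom_rel k (WeylRel.tt (k := k) i j)
  simpa [t] using this

lemma dd (i j : Fin d) : del k d i * del k d j = del k d j * del k d i := by
  have := RingQuot.mkAlgHom_rel k (WeylRel.dd (k := k) i j)
  simpa [del] using this

lemma dt (i j : Fin d) :
    del k d i * t k d j = t k d j * del k d i + if i = j then 1 else 0 := by
  have := RingQuot.mkAlgHom_rel k (WeylRel.dt (k := k) i j)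
  rw [map_mul, map_add, map_mul] at this
  rw [t, del, this]
  split_ifs <;> simp

lemma mem_center_of_comm (w : WeylAlgebra k d) (ht : ∀ i, t k d i * w = w * t k d i)
    (hd : ∀ i, del k d i * w = w * del k d i) : w ∈ Subring.center (WeylAlgebra k d) := by
  rw [Subring.mem_center_iff]
  intro g
  obtain ⟨f, rfl⟩ := RingQuot.mkAlgHom_surjective k (WeylRel k d) g
  induction f using FreeAlgebra.induction with
  | grade0 r => rw [AlgHom.commutes]; exact Algebra.commutes r w
  | grade1 v =>
    rcases v with i | i
    · exact ht i
    · exact hd i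
  | mul a b ha hb => rw [map_mul, mul_assoc, hb, ← mul_assoc, ha, mul_assoc]
  | add a b ha hb => rw [map_add, add_mul, mul_add, ha, hb]

lemma pow_comm {W : Type*} [Ring W] {p : ℕ} (hp : 0 < p) (hpW : (p : W) = 0) {x y : W}
    (h : adE y x = 1) : y * x ^ p = x ^ p * y := by
  obtain ⟨n, rfl⟩ : ∃ n, p = n + 1 := ⟨p - 1, by omega⟩
  have := adE_pow_succ h n
  rw [adE_apply, nsmul_eq_mul, hpW, zero_mul, sub_eq_zero] at this
  exact this

lemma comm_pow {W : Type*} [Ring W] {x y : W} (h : y * x = x * y) (n : ℕ) :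
    y * x ^ n = x ^ n * y := (Commute.pow_right (show Commute y x from h) n)

lemma generic_main {W : Type*} [Ring W] {n : ℕ} (T D : Fin n → W)
    (htt : ∀ i j, T i * T j = T j * T i) (hdd : ∀ i j, D i * D j = D j * D i)
    (hdt : ∀ i j, D i * T j = T j * D i + if i = j then 1 else 0)
    (hcen : ∀ w, (∀ i, T i * w = w * T i) → (∀ i, D i * w = w * D i) → w ∈ Subring.center W)
    (p : ℕ) (hp : p.Prime) (hpW : (p : W) = 0) :
    Module.Finite (Subring.center W) W ∧ Module.Free (Subring.center W) W ∧
    Function.Bijective (AlgHom.mulLeftRight (Subring.center W) W) := by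
  have t_pow_mem : ∀ i, T i ^ p ∈ Subring.center W := by
    intro i
    refine hcen _ (fun j => comm_pow (htt j i) p) fun j => ?_
    by_cases h : j = i
    · subst h
      exact pow_comm hp.pos hpW (by rw [adE_apply, hdt]; simp)
    · exact comm_pow (by rw [hdt, if_neg h, add_zero]) p
  have del_pow_mem : ∀ i, D i ^ p ∈ Subring.center W := by
    intro i
    refine hcen _ (fun j => ?_) (fun j => comm_pow (hdd j i) p)
    by_cases h : i = j
    · subst h
      have := pow_comm hp.pos hpW (x := D i) (y := -T i) (by rw [adE_apply, mul_neg, hdt]; simp)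
      simpa using this
    · exact comm_pow (by rw [hdt, if_neg h, add_zero]) p
  refine abstract_azumaya hp hpW (ι := Fin n ⊕ Fin n) (Sum.elim T D)
    (Sum.elim D (fun i => -T i)) ?_ ?_ ?_ ?_
  · rintro (i | i) (j | j)
    · simp [adE_apply, hdt]
    · simp [adE_apply, hdd i j]
    · simp [adE_apply, htt i j]
    · by_cases h : i = j
      · simp [adE_apply, hdt, h]
      · simp [adE_apply, hdt, h, Ne.symm h]
  · rintro (i | i) (j | j)
    · simp [hdd i j, Subring.zero_mem]
    · simp only [Sum.elim_inl, Sum.elim_inr, mul_neg, neg_mul, hdt]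
      split_ifs <;> simp [Subring.zero_mem, Subring.one_mem]
    · simp only [Sum.elim_inl, Sum.elim_inr, mul_neg, neg_mul, hdt]
      split_ifs <;> simp [Subring.zero_mem, Subring.one_mem]
    · simp [htt i j, Subring.zero_mem]
  · rintro (i | i)
    · exact del_pow_mem i
    · rw [Sum.elim_inr, neg_pow]
      exact Subring.mul_mem _ (Subring.pow_mem _ (Subring.neg_mem _ (Subring.one_mem _)) _)
        (t_pow_mem i)
  · intro w hw
    refine hcen w (fun i => ?_) (fun i => ?_)
    · have := hw (Sum.inr i)
      rw [adE_apply, Sum.elim_inr, neg_mul, mul_neg, sub_neg_eq_add, neg_add_eq_zero] at this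
      exact this
    · have := hw (Sum.inl i)
      rwa [adE_apply, Sum.elim_inl, sub_eq_zero] at this

lemma weyl_main (p : ℕ) (hp : p.Prime) (hchar : (p : k) = 0) :
    Module.Finite (Subring.center (WeylAlgebra k d)) (WeylAlgebra k d) ∧
    Module.Free (Subring.center (WeylAlgebra k d)) (WeylAlgebra k d) ∧
    Function.Bijective (AlgHom.mulLeftRight (Subring.center (WeylAlgebra k d))
      (WeylAlgebra k d)) := by
  have hpW : (p : WeylAlgebra k d) = 0 := by
    rw [← map_natCast (algebraMap k (WeylAlgebra k d)) p, hchar, map_zero]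
  exact generic_main (t k d) (del k d) (tt k d) (dd k d) (dt k d) (mem_center_of_comm k d)
    p hp hpW

end

end WeylAux

open WeylAlgebra in
/-- **Azumaya property of the Weyl algebra.** In characteristic `p`, the Weyl algebra `W`
is an Azumaya algebra over its center `Z`: it is a faithful, finitely generated projective
`Z`-module, and the natural map `W ⊗_Z W^op → End_Z(W)`, `δ ⊗ δ' ↦ (x ↦ δ·x·δ')`,
is bijective. -/
theorem weylAlgebra_isAzumaya (p : ℕ) (hp : p.Prime)
    (k : Type*) [CommRing k] (hchar : (p : k) = 0) (d : ℕ) (hd : 1 ≤ d) :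
    Module.Finite (Subring.center (WeylAlgebra k d)) (WeylAlgebra k d) ∧
    Module.Projective (Subring.center (WeylAlgebra k d)) (WeylAlgebra k d) ∧
    FaithfulSMul (Subring.center (WeylAlgebra k d)) (WeylAlgebra k d) ∧
    Function.Bijective (azumayaMap k d) := by
  obtain ⟨h1, h2, h3⟩ := WeylAux.weyl_main k d p hp hchar
  refine ⟨h1, inferInstance, ?_, ?_⟩
  · refine ⟨fun {a b} h => Subtype.ext ?_⟩
    have := h 1
    simpa [Subring.smul_def] using this
  · have : ⇑(azumayaMap k d) = ⇑(AlgHom.mulLeftRight (Subring.center (WeylAlgebra k d))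
        (WeylAlgebra k d)) := by
      funext u
      induction u using TensorProduct.induction_on with
      | zero => rw [map_zero, map_zero]
      | add a b ha hb => rw [map_add, map_add, ha, hb]
      | tmul a b =>
        ext w
        rw [AlgHom.mulLeftRight_apply]
        rfl
    rw [this]
    exact h3
end
end

section
/- Let p be a prime and k a commutative ring with p·1 = 0, and let W = W_d(k) be the d-th Weyl algebra over k (d ≥ 1), with center Z and with A ⊆ W the k-subalgebra generated by t_1, …, t_d, ∂_1^p, …, ∂_d^p. Regard W as a right A-module by right multiplication. Then the natural map W ⊗_Z A → End_A(W), sending δ ⊗ a to the right-A-linear endomorphism x ↦ δ·x·a, is an isomorphism of rings. -/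
noncomputable section

section Generic

variable {R : Type*} [Ring R] {d : ℕ}

/-- ordered monomial along a list -/
def lmon (P : Fin d → R) (l : List (Fin d)) (J : Fin d → ℕ) : R :=
  (l.map fun i => P i ^ J i).prod

theorem lmon_cons (P : Fin d → R) (i : Fin d) (l : List (Fin d)) (J : Fin d → ℕ) :
    lmon P (i :: l) J = P i ^ J i * lmon P l J := by simp [lmon]

theorem lmon_commute (P : Fin d → R) (x : R) (l : List (Fin d)) (J : Fin d → ℕ)
    (h : ∀ i ∈ l, Commute x (P i)) : Commute x (lmon P l J) := by
  induction l with
  | nil => simp [lmon]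
  | cons i l ih =>
    rw [lmon_cons]
    exact ((h i (by simp)).pow_right _).mul_right (ih fun j hj => h j (by simp [hj]))

theorem lmon_add (P : Fin d → R) (hPP : ∀ i j, Commute (P i) (P j)) (l : List (Fin d))
    (J K : Fin d → ℕ) : lmon P l (J + K) = lmon P l J * lmon P l K := by
  induction l with
  | nil => simp [lmon]
  | cons i l ih =>
    have h : Commute (P i ^ K i) (lmon P l J) :=
      lmon_commute P _ l J fun j _ => (hPP i j).pow_left _
    simp only [lmon_cons, ih, Pi.add_apply, pow_add]
    rw [mul_assoc (P i ^ J i), ← mul_assoc (P i ^ K i), h.eq]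
    simp only [mul_assoc]

theorem lmon_mul (P : Fin d → R) (l : List (Fin d)) (n : ℕ) (K : Fin d → ℕ) :
    lmon P l (fun i => n * K i) = lmon (fun i => P i ^ n) l K := by
  simp [lmon, pow_mul]

theorem comm_pow {x y c : R} (h : x * y = y * x + c) (hc : Commute c y) (n : ℕ) :
    x * y ^ n = y ^ n * x + n * (c * y ^ (n - 1)) := by
  induction n with
  | zero => simp
  | succ n ih =>
    rw [pow_succ, ← mul_assoc, ih, add_mul, mul_assoc (y ^ n), h]
    rcases n with _ | n
    · simp
    · have := (hc.pow_right (n + 1)).eq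
      simp only [Nat.add_sub_cancel, mul_add, mul_assoc, ← pow_succ]
      rw [← this]
      push_cast
      noncomm_ring

/-- `x ↦ x T - T x` -/
def adT (T : R) : R →+ R := AddMonoidHom.mulRight T - AddMonoidHom.mulLeft T

theorem adT_apply (T x : R) : adT T x = x * T - T * x := rfl

theorem pow_comm' {P T : R} (h : P * T = T * P + 1) (m : ℕ) :
    P ^ m * T = T * P ^ m + m * P ^ (m - 1) := by
  have h2 : T * P = P * T + (-1) := by rw [h]; simp
  have := comm_pow h2 ((Commute.one_left _).neg_left) m
  rw [this]; simp

theorem adT_pow {P T : R} (h : P * T = T * P + 1) (m : ℕ) (y : R) (hy : Commute T y) :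
    adT T (P ^ m * y) = m * (P ^ (m - 1) * y) := by
  rw [adT_apply, mul_assoc, ← hy.eq, ← mul_assoc, pow_comm' h]
  simp [add_mul, mul_assoc]

theorem adT_iter {P T : R} (h : P * T = T * P + 1) (n m : ℕ) (y : R) (hy : Commute T y) :
    (adT T)^[n] (P ^ m * y) = (m.descFactorial n : R) * (P ^ (m - n) * y) := by
  induction n with
  | zero => simp
  | succ n ih =>
    rw [Function.iterate_succ_apply', ih, ← nsmul_eq_mul, map_nsmul, adT_pow h _ _ hy,
      Nat.descFactorial_succ]
    rw [nsmul_eq_mul, ← mul_assoc, ← Nat.cast_mul, Nat.sub_sub, mul_comm (m - n)]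

/-- iterates of `adT` -/
def adN (T : R) : ℕ → (R →+ R)
  | 0 => AddMonoidHom.id R
  | n + 1 => (adT T).comp (adN T n)

theorem adN_apply (T : R) (n : ℕ) (x : R) : adN T n x = (adT T)^[n] x := by
  induction n with
  | zero => rfl
  | succ n ih => rw [Function.iterate_succ_apply', ← ih]; rfl

/-- the one variable projection -/
def proj1 (p : ℕ) (P T : R) (j : ℕ) : R →+ R :=
  (adN T (p - 1)).comp (AddMonoidHom.mulLeft (P ^ (p - 1 - j)))

theorem proj1_apply (p : ℕ) (P T : R) (j : ℕ) (x : R) :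
    proj1 p P T j x = (adT T)^[p - 1] (P ^ (p - 1 - j) * x) := by
  rw [← adN_apply]; rfl

theorem proj1_pow {p : ℕ} (hR : (p : R) = 0) {P T : R}
    (h : P * T = T * P + 1) {j m : ℕ} (hj : j < p) (hm : m < p) (y : R) (hy : Commute T y) :
    proj1 p P T j (P ^ m * y) = if m = j then ((p - 1).factorial : R) * y else 0 := by
  rw [proj1_apply, ← mul_assoc, ← pow_add, adT_iter h _ _ _ hy]
  split_ifs with hmj
  · have : p - 1 - j + m = p - 1 := by omega
    rw [this, Nat.descFactorial_self]; simp
  · rcases lt_or_gt_of_ne hmj with h1 | h1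
    · rw [Nat.descFactorial_of_lt (by omega)]; simp
    · have : p ∣ (p - 1 - j + m).descFactorial (p - 1) := by
        rw [Nat.descFactorial_eq_prod_range]
        have hmem : (m - j - 1) ∈ Finset.range (p - 1) := by simp; omega
        refine dvd_trans ?_ (Finset.dvd_prod_of_mem _ hmem)
        have : p - 1 - j + m - (m - j - 1) = p := by omega
        rw [this]
      obtain ⟨q, hq⟩ := this
      rw [hq]; simp [hR]

/-- the multi variable projection -/
def projL (p : ℕ) (P T : Fin d → R) (J : Fin d → ℕ) : List (Fin d) → (R →+ R)
  | [] => AddMonoidHom.id R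
  | i :: l => (proj1 p (P i) (T i) (J i)).comp (projL p P T J l)

theorem projL_lmon {p : ℕ} (hR : (p : R) = 0) (P T : Fin d → R)
    (hPP : ∀ i j, Commute (P i) (P j))
    (hPT : ∀ i j, P i * T j = T j * P i + if i = j then 1 else 0)
    (J K : Fin d → ℕ) (hJ : ∀ i, J i < p) (hK : ∀ i, K i < p) (l : List (Fin d)) (hl : l.Nodup) :
    ∀ (y : R), (∀ i, Commute (T i) y ∨ i ∉ l) →
    projL p P T J l (lmon P l K * y) =
      if ∀ i ∈ l, K i = J i then (((p - 1).factorial ^ l.length : ℕ) : R) * y else 0 := by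
  induction l with
  | nil => intro y _; simp [projL, lmon]
  | cons i l ih =>
    intro y hy
    have hil : i ∉ l := (List.nodup_cons.1 hl).1
    have hc : Commute (P i ^ K i) (lmon P l K) :=
      lmon_commute P _ l K fun j _ => (hPP i j).pow_left _
    rw [lmon_cons, hc.eq, mul_assoc, projL, AddMonoidHom.comp_apply,
      ih (List.nodup_cons.1 hl).2]
    · have hyi : Commute (T i) y := by simpa using hy i
      have hii : P i * T i = T i * P i + 1 := by simpa using hPT i i
      by_cases h1 : ∀ j ∈ l, K j = J j
      · rw [if_pos h1, ← nsmul_eq_mul, map_nsmul, proj1_pow hR hii (hJ i) (hK i) y hyi]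
        by_cases h2 : K i = J i
        · rw [if_pos h2, if_pos (by simpa [h2] using h1)]
          simp [pow_succ, mul_assoc]
        · rw [if_neg h2, if_neg (by simp [h2])]; simp
      · rw [if_neg h1, if_neg (fun h => h1 fun j hj => h j (by simp [hj])), map_zero]
    · intro j
      by_cases hj : j ∈ l
      · left
        have hij : i ≠ j := by rintro rfl; exact hil hj
        have h1 : Commute (T j) (P i) := by
          have := hPT i j
          rw [if_neg hij, add_zero] at this
          exact this.symm
        have h2 : Commute (T j) y := by
          rcases hy j with h | h
          · exact h
          · simp [hj] at h
        exact (h1.pow_right _).mul_right h2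
      · exact Or.inr hj

theorem exists_inv {p : ℕ} (hp : p.Prime) (hR : (p : R) = 0) (d : ℕ) :
    ∃ v : ℕ, (v : R) * (((p - 1).factorial ^ d : ℕ) : R) = 1 := by
  have hc : Nat.Coprime ((p - 1).factorial ^ d) p := by
    apply Nat.Coprime.pow_left
    exact ((Nat.coprime_factorial_iff (by
      have := hp.two_le; omega)).2 (by
        rw [hp.minFac_eq]; have := hp.two_le; omega)).symm
  obtain ⟨m, hm⟩ := Nat.exists_mul_mod_eq_one_of_coprime hc hp.one_lt
  refine ⟨m, ?_⟩
  rw [← Nat.cast_mul, mul_comm, ← Nat.div_add_mod (_ * m) p, hm.2]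
  simp [hR]

/-- existence of a projection -/
theorem proj_sum {p : ℕ} (hR : (p : R) = 0) (P T : Fin d → R)
    (hPP : ∀ i j, Commute (P i) (P j))
    (hPT : ∀ i j, P i * T j = T j * P i + if i = j then 1 else 0)
    (J : Fin d → Fin p) (a : (Fin d → Fin p) → R) (ha : ∀ i K, Commute (T i) (a K)) :
    projL p P T (fun i => (J i : ℕ)) (List.finRange d)
      (∑ K, lmon P (List.finRange d) (fun i => (K i : ℕ)) * a K) =
      (((p - 1).factorial ^ d : ℕ) : R) * a J := by
  rw [map_sum, Finset.sum_eq_single J]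
  · rw [projL_lmon hR P T hPP hPT _ _ (fun i => (J i).2) (fun i => (J i).2) _
      (List.nodup_finRange d) _ (fun i => Or.inl (ha i J)), if_pos (by simp)]
    simp
  · intro K _ hK
    rw [projL_lmon hR P T hPP hPT _ _ (fun i => (J i).2) (fun i => (K i).2) _
      (List.nodup_finRange d) _ (fun i => Or.inl (ha i K)), if_neg]
    intro h
    exact hK (funext fun i => Fin.ext (h i (List.mem_finRange i)))
  · simp

theorem lmon_indep {p : ℕ} (hp : p.Prime) (hR : (p : R) = 0) (P T : Fin d → R)
    (hPP : ∀ i j, Commute (P i) (P j))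
    (hPT : ∀ i j, P i * T j = T j * P i + if i = j then 1 else 0)
    (a : (Fin d → Fin p) → R) (ha : ∀ i K, Commute (T i) (a K))
    (h : ∑ K, lmon P (List.finRange d) (fun i => (K i : ℕ)) * a K = 0) (J) : a J = 0 := by
  have h1 := proj_sum hR P T hPP hPT J a ha
  rw [h, map_zero] at h1
  obtain ⟨v, hv⟩ := exists_inv (R := R) hp hR d
  rw [← one_mul (a J), ← hv, mul_assoc, ← h1, mul_zero]

theorem lmon_indep2 {p : ℕ} (hp : p.Prime) (hR : (p : R) = 0) (P T : Fin d → R)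
    (hPP : ∀ i j, Commute (P i) (P j)) (hTT : ∀ i j, Commute (T i) (T j))
    (hPT : ∀ i j, P i * T j = T j * P i + if i = j then 1 else 0)
    (C : (Fin d → Fin p) × (Fin d → Fin p) → R) (hCT : ∀ i K, Commute (T i) (C K))
    (hCP : ∀ i K, Commute (P i) (C K))
    (h : ∑ IJ : (Fin d → Fin p) × (Fin d → Fin p),
      lmon T (List.finRange d) (fun i => (IJ.1 i : ℕ)) *
        (lmon P (List.finRange d) (fun i => (IJ.2 i : ℕ)) * C IJ) = 0) (IJ) : C IJ = 0 := by
  rw [Fintype.sum_prod_type] at h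
  simp only [← Finset.mul_sum] at h
  have h1 := lmon_indep hp hR T (fun i => -P i) hTT
    (fun i j => by
      rw [mul_neg, neg_mul, hPT]
      simp [eq_comm]) _
    (fun i K => (Finset.univ.sum_induction _ (fun y => Commute (-P i) y)
      (fun _ _ => Commute.add_right) (Commute.zero_right _) fun J _ =>
        ((lmon_commute _ _ _ _ fun j _ => hPP i j).mul_right (hCP _ _)).neg_left)) h
  exact lmon_indep hp hR P T hPP hPT
    (fun J => C (IJ.1, J)) (fun i K => hCT _ _) (h1 IJ.1) IJ.2

end Generic

section Span

variable {k : Type*} [CommRing k] {R : Type*} [Ring R] [Algebra k R] {d : ℕ}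

theorem adjoin_eq_span_lmon (P : Fin d → R) (hPP : ∀ i j, Commute (P i) (P j)) :
    Subalgebra.toSubmodule (Algebra.adjoin k (Set.range P)) =
      Submodule.span k (Set.range (lmon P (List.finRange d))) := by
  rw [Algebra.adjoin_eq_span]
  congr 1
  ext x
  constructor
  · intro hx
    refine Submonoid.closure_induction
      (motive := fun x _ => x ∈ Set.range (lmon P (List.finRange d))) ?_ ?_ ?_ hx
    · rintro _ ⟨i, rfl⟩
      refine ⟨Pi.single i 1, ?_⟩
      unfold lmon
      rw [List.prod_map_eq_pow_single i]
      · simp [List.count_eq_one_of_mem (List.nodup_finRange d) (List.mem_finRange i)]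
      · intro j hj _; simp [Pi.single_eq_of_ne hj]
    · exact ⟨0, by simp [lmon]⟩
    · rintro _ _ _ _ ⟨J, rfl⟩ ⟨K, rfl⟩
      exact ⟨J + K, lmon_add P hPP _ J K⟩
  · rintro ⟨J, rfl⟩
    refine Submonoid.list_prod_mem _ ?_
    intro y hy
    obtain ⟨i, _, rfl⟩ := List.mem_map.1 hy
    exact Submonoid.pow_mem _ (Submonoid.subset_closure (Set.mem_range_self i)) _

theorem ad_mem (T : Fin d → R) (x : R) (hx : ∀ j, ∃ e : k, x * T j = T j * x + algebraMap k R e)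
    (y : R) (hy : y ∈ Algebra.adjoin k (Set.range T)) :
    x * y - y * x ∈ Algebra.adjoin k (Set.range T) := by
  induction hy using Algebra.adjoin_induction with
  | mem y hy =>
    obtain ⟨j, rfl⟩ := hy
    obtain ⟨e, he⟩ := hx j
    rw [he, add_sub_cancel_left]
    exact Subalgebra.algebraMap_mem _ _
  | algebraMap r => rw [Algebra.commutes, sub_self]; exact zero_mem _
  | add a b _ _ h1 h2 =>
    have := add_mem h1 h2
    convert this using 1; noncomm_ring
  | mul a b ha hb h1 h2 =>
    have := add_mem (mul_mem h1 hb) (mul_mem ha h2)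
    convert this using 1; noncomm_ring

theorem mul_span_top (P T : Fin d → R)
    (hPP : ∀ i j, Commute (P i) (P j)) (hTT : ∀ i j, Commute (T i) (T j))
    (hPT : ∀ i j, ∃ e : k, P i * T j = T j * P i + algebraMap k R e)
    (hgen : Algebra.adjoin k (Set.range P ∪ Set.range T) = ⊤) (w : R) :
    w ∈ Submodule.span k
      (Set.range fun IJ : (Fin d → ℕ) × (Fin d → ℕ) =>
        lmon T (List.finRange d) IJ.1 * lmon P (List.finRange d) IJ.2) := by
  have key : ∀ w ∈ Algebra.adjoin k (Set.range P ∪ Set.range T),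
      ∀ v ∈ Subalgebra.toSubmodule (Algebra.adjoin k (Set.range T)) *
        Subalgebra.toSubmodule (Algebra.adjoin k (Set.range P)),
      w * v ∈ Subalgebra.toSubmodule (Algebra.adjoin k (Set.range T)) *
        Subalgebra.toSubmodule (Algebra.adjoin k (Set.range P)) := by
    intro w hw
    induction hw using Algebra.adjoin_induction with
    | mem x hx =>
      intro v hv
      induction hv using Submodule.mul_induction_on' with
      | mem_mul_mem a ha b hb =>
        rcases hx with ⟨i, rfl⟩ | ⟨i, rfl⟩
        · have h1 := ad_mem T (P i) (hPT i) a ha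
          have : P i * (a * b) = a * (P i * b) + (P i * a - a * P i) * b := by noncomm_ring
          rw [this]
          exact add_mem (Submodule.mul_mem_mul ha
            (Subalgebra.mul_mem _ (Algebra.subset_adjoin ⟨i, rfl⟩ : P i ∈ Algebra.adjoin k (Set.range P)) hb))
            (Submodule.mul_mem_mul h1 hb)
        · rw [← mul_assoc]
          exact Submodule.mul_mem_mul
            (Subalgebra.mul_mem _ (Algebra.subset_adjoin ⟨i, rfl⟩ : T i ∈ Algebra.adjoin k (Set.range T)) ha) hb
      | add a _ b _ h1 h2 => rw [mul_add]; exact add_mem h1 h2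
    | algebraMap r => intro v hv; rw [← Algebra.smul_def]; exact Submodule.smul_mem _ _ hv
    | add a b _ _ h1 h2 => intro v hv; rw [add_mul]; exact add_mem (h1 v hv) (h2 v hv)
    | mul a b _ _ h1 h2 => intro v hv; rw [mul_assoc]; exact h1 _ (h2 v hv)
  have h1 := key w (by rw [hgen]; trivial) (1 * 1) (Submodule.mul_mem_mul
    (one_mem (Algebra.adjoin k (Set.range T))) (one_mem (Algebra.adjoin k (Set.range P))))
  rw [mul_one, mul_one, adjoin_eq_span_lmon P hPP, adjoin_eq_span_lmon T hTT,
    Submodule.span_mul_span] at h1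
  refine Submodule.span_mono ?_ h1
  rintro _ ⟨_, ⟨I, rfl⟩, _, ⟨J, rfl⟩, rfl⟩
  exact ⟨(I, J), rfl⟩

theorem lmon_mod (P : Fin d → R) (hPP : ∀ i j, Commute (P i) (P j)) (p : ℕ)
    (J : Fin d → ℕ) (l : List (Fin d)) :
    lmon P l J = lmon P l (fun i => J i % p) * lmon (fun i => P i ^ p) l (fun i => J i / p) := by
  rw [← lmon_mul, ← lmon_add P hPP]
  congr 1; funext i; exact (Nat.mod_add_div _ _).symm

end Span

namespace WeylAlgebra

variable (k : Type*) [CommRing k] (d : ℕ)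

theorem tt_comm (i j : Fin d) : Commute (t k d i) (t k d j) := by
  have := RingQuot.mkAlgHom_rel k (WeylRel.tt (k := k) i j)
  rw [map_mul, map_mul] at this
  exact this

theorem dd_comm (i j : Fin d) : Commute (del k d i) (del k d j) := by
  have := RingQuot.mkAlgHom_rel k (WeylRel.dd (k := k) i j)
  rw [map_mul, map_mul] at this
  exact this

theorem dt_rel (i j : Fin d) :
    del k d i * t k d j = t k d j * del k d i + if i = j then 1 else 0 := by
  have := RingQuot.mkAlgHom_rel k (WeylRel.dt (k := k) i j)
  rw [map_mul, map_add, map_mul] at this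
  rw [del, t, this]
  split_ifs <;> simp

theorem td_rel (i j : Fin d) : t k d i * del k d j =
    del k d j * t k d i + algebraMap k (WeylAlgebra k d) (if i = j then -1 else 0) := by
  rw [dt_rel, add_assoc]
  by_cases h : i = j
  · subst h
    rw [if_pos rfl, if_pos rfl, ← map_one (algebraMap k (WeylAlgebra k d)), ← map_add]
    simp
  · rw [if_neg h, if_neg (Ne.symm h)]; simp

theorem gen_top :
    Algebra.adjoin k (Set.range (del k d) ∪ Set.range (t k d)) = ⊤ := by
  have h := congrArg (Subalgebra.map (RingQuot.mkAlgHom k (WeylRel k d)))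
    (FreeAlgebra.adjoin_range_ι k (Fin d ⊕ Fin d))
  rw [AlgHom.map_adjoin, Algebra.map_top,
    (AlgHom.range_eq_top _).2 (RingQuot.mkAlgHom_surjective k (WeylRel k d))] at h
  rw [← h]
  congr 1
  ext x
  constructor
  · rintro (⟨i, rfl⟩ | ⟨i, rfl⟩)
    · exact ⟨_, ⟨Sum.inr i, rfl⟩, rfl⟩
    · exact ⟨_, ⟨Sum.inl i, rfl⟩, rfl⟩
  · rintro ⟨_, ⟨i | i, rfl⟩, rfl⟩
    · exact Or.inr ⟨i, rfl⟩
    · exact Or.inl ⟨i, rfl⟩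

theorem central_of (z : WeylAlgebra k d) (hd : ∀ i, Commute z (del k d i))
    (ht : ∀ i, Commute z (t k d i)) (w : WeylAlgebra k d) : Commute z w := by
  have hw : w ∈ Algebra.adjoin k (Set.range (del k d) ∪ Set.range (t k d)) := by
    rw [gen_top]; trivial
  induction hw using Algebra.adjoin_induction with
  | mem x hx => 
    rcases hx with ⟨i, rfl⟩ | ⟨i, rfl⟩
    · exact hd i
    · exact ht i
  | algebraMap r => exact (Algebra.commutes r z).symm
  | add a b _ _ h1 h2 => exact h1.add_right h2
  | mul a b _ _ h1 h2 => exact h1.mul_right h2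

variable {k}

theorem cast_zero {p : ℕ} (hchar : (p : k) = 0) (R : Type*) [Ring R] [Algebra k R] :
    (p : R) = 0 := by
  rw [← map_natCast (algebraMap k R), hchar, map_zero]

theorem tp_central {p : ℕ} (hchar : (p : k) = 0) (i : Fin d) (w : WeylAlgebra k d) :
    Commute (t k d i ^ p) w := by
  refine central_of k d _ (fun j => ?_) (fun j => (tt_comm k d i j).pow_left _) w
  have h := comm_pow (dt_rel k d j i) (by split_ifs <;> simp) p
  rw [cast_zero hchar, zero_mul, add_zero] at h
  exact h.symm

theorem dp_central {p : ℕ} (hchar : (p : k) = 0) (i : Fin d) (w : WeylAlgebra k d) :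
    Commute (del k d i ^ p) w := by
  refine central_of k d _ (fun j => (dd_comm k d i j).pow_left _) (fun j => ?_) w
  have h := comm_pow (td_rel k d j i) (Algebra.commutes _ _) p
  rw [cast_zero hchar, zero_mul, add_zero] at h
  exact h.symm

theorem mem_A_iff (a : WeylAlgebra k d) :
    a ∈ Subalgebra.centralizer k
      ((Algebra.adjoin k (Set.range (t k d)) : Subalgebra k (WeylAlgebra k d)) :
        Set (WeylAlgebra k d)) ↔ ∀ i, Commute (t k d i) a := by
  rw [Subalgebra.mem_centralizer_iff]
  constructor
  · intro h i
    exact h _ (Algebra.subset_adjoin ⟨i, rfl⟩)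
  · intro h g hg
    change Commute g a
    replace hg : g ∈ Algebra.adjoin k (Set.range (t k d)) := hg
    induction hg using Algebra.adjoin_induction with
    | mem x hx => obtain ⟨i, rfl⟩ := hx; exact h i
    | algebraMap r => exact Algebra.commutes r a
    | add a b _ _ h1 h2 => exact h1.add_left h2
    | mul a b _ _ h1 h2 => exact h1.mul_left h2

/-- the centralizer of the `t_i` -/
abbrev AA (k : Type*) [CommRing k] (d : ℕ) : Subalgebra k (WeylAlgebra k d) :=
  Subalgebra.centralizer k
      ((Algebra.adjoin k (Set.range (t k d)) : Subalgebra k (WeylAlgebra k d)) :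
        Set (WeylAlgebra k d))

/-- reduced exponents -/
def redE {p : ℕ} (hp : p.Prime) {d : ℕ} (J : Fin d → ℕ) (i : Fin d) : Fin p :=
  ⟨J i % p, Nat.mod_lt _ hp.pos⟩

theorem spanA {p : ℕ} (hp : p.Prime) (hchar : (p : k) = 0) (w : WeylAlgebra k d) :
    ∃ a : (Fin d → Fin p) → WeylAlgebra k d, (∀ i K, Commute (t k d i) (a K)) ∧
      w = ∑ K, lmon (del k d) (List.finRange d) (fun i => (K i : ℕ)) * a K := by
  have hw := mul_span_top (k := k) (t k d) (del k d) (tt_comm k d) (dd_comm k d)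
    (fun i j => ⟨_, td_rel k d i j⟩)
    (by rw [Set.union_comm]; exact gen_top k d) w
  induction hw using Submodule.span_induction with
  | mem x hx =>
    obtain ⟨⟨J, I⟩, rfl⟩ := hx
    refine ⟨Pi.single (redE hp J) (lmon (fun i => del k d i ^ p) (List.finRange d)
      (fun i => J i / p) * lmon (t k d) (List.finRange d) I), fun i K => ?_, ?_⟩
    · rcases eq_or_ne K (redE hp J) with rfl | h
      · rw [Pi.single_eq_same]
        exact (lmon_commute _ _ _ _ fun j _ => (dp_central d hchar j _).symm).mul_right
          (lmon_commute _ _ _ _ fun j _ => tt_comm k d i j)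
      · rw [Pi.single_eq_of_ne h]; exact Commute.zero_right _
    · rw [Finset.sum_eq_single (redE hp J)]
      · rw [Pi.single_eq_same, ← mul_assoc]
        refine congrArg (· * lmon (t k d) (List.finRange d) I) ?_
        exact lmon_mod _ (dd_comm k d) p J _
      · intro K _ h; rw [Pi.single_eq_of_ne h, mul_zero]
      · simp
  | zero => exact ⟨0, by simp, by simp⟩
  | add x y _ _ hx hy =>
    obtain ⟨a, ha, rfl⟩ := hx
    obtain ⟨b, hb, rfl⟩ := hy
    exact ⟨a + b, fun i K => (ha i K).add_right (hb i K), by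
      simp [mul_add, Finset.sum_add_distrib]⟩
  | smul r x _ hx =>
    obtain ⟨a, ha, rfl⟩ := hx
    exact ⟨r • a, fun i K => (ha i K).smul_right r, by simp [Finset.smul_sum]⟩

/-- the operators in the image of `W ⊗ A` -/
def Good (p : ℕ) (f : WeylAlgebra k d → WeylAlgebra k d) : Prop :=
  ∃ c : ((Fin d → Fin p) × (Fin d → Fin p)) → AA k d, ∀ x,
    f x = ∑ IJ : (Fin d → Fin p) × (Fin d → Fin p),
      (monomialT k d fun i => (IJ.1 i : ℕ)) * (monomialD k d fun i => (IJ.2 i : ℕ)) *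
              x * (c IJ : WeylAlgebra k d)

variable {d}

theorem Good.add {p : ℕ} {f g : WeylAlgebra k d → WeylAlgebra k d} (hf : Good d p f)
    (hg : Good d p g) : Good d p (fun x => f x + g x) := by
  obtain ⟨c, hc⟩ := hf
  obtain ⟨e, he⟩ := hg
  exact ⟨c + e, fun x => by simp [hc, he, mul_add, Finset.sum_add_distrib]⟩

theorem Good.zero {p : ℕ} : Good d p (fun _ : WeylAlgebra k d => 0) :=
  ⟨0, fun x => by simp⟩

theorem Good.sum {p : ℕ} {ι : Type*} (s : Finset ι)
    {f : ι → WeylAlgebra k d → WeylAlgebra k d} (hf : ∀ i, Good d p (f i)) :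
    Good d p (fun x => ∑ i ∈ s, f i x) := by
  classical
  induction s using Finset.induction_on with
  | empty => simpa using Good.zero
  | insert i s hi ih => simp only [Finset.sum_insert hi]; exact (hf i).add ih

theorem Good.smul {p : ℕ} {f : WeylAlgebra k d → WeylAlgebra k d} (r : k) (hf : Good d p f) :
    Good d p (fun x => r • f x) := by
  obtain ⟨c, hc⟩ := hf
  exact ⟨r • c, fun x => by simp [hc, Finset.smul_sum]⟩

theorem Good.basic {p : ℕ} (hp : p.Prime) (hchar : (p : k) = 0) (u a : WeylAlgebra k d)
    (ha : a ∈ AA k d) : Good d p (fun x => u * x * a) := by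
  have hu := mul_span_top (k := k) (del k d) (t k d) (dd_comm k d) (tt_comm k d)
    (fun i j => ⟨if i = j then 1 else 0, by rw [dt_rel]; split_ifs <;> simp⟩)
    (gen_top k d) u
  induction hu using Submodule.span_induction with
  | mem x hx =>
    obtain ⟨⟨I, J⟩, rfl⟩ := hx
    set z1 := lmon (fun i => t k d i ^ p) (List.finRange d) (fun i => I i / p) with hz1
    set z2 := lmon (fun i => del k d i ^ p) (List.finRange d) (fun i => J i / p) with hz2
    have h1 : ∀ w, Commute w z1 := fun w =>
      lmon_commute _ _ _ _ fun j _ => (tp_central d hchar j w).symm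
    have h2 : ∀ w, Commute w z2 := fun w =>
      lmon_commute _ _ _ _ fun j _ => (dp_central d hchar j w).symm
    have hz : z1 * z2 * a ∈ AA k d := by
      refine mul_mem (mul_mem ?_ ?_) ha
      · rw [mem_A_iff]; exact fun i => h1 _
      · rw [mem_A_iff]; exact fun i => h2 _
    refine ⟨Pi.single (redE hp I, redE hp J) ⟨z1 * z2 * a, hz⟩, fun x => ?_⟩
    rw [Finset.sum_eq_single (redE hp I, redE hp J)]
    · rw [Pi.single_eq_same]
      dsimp only
      rw [lmon_mod _ (tt_comm k d) p I, lmon_mod _ (dd_comm k d) p J, ← hz1, ← hz2]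
      change lmon _ _ (fun i => I i % p) * z1 * (lmon _ _ (fun i => J i % p) * z2) * x * a =
        lmon _ _ (fun i => I i % p) * lmon _ _ (fun i => J i % p) * x * (z1 * z2 * a)
      generalize lmon (t k d) _ (fun i => I i % p) = m
      generalize lmon (del k d) _ (fun i => J i % p) = n
      calc m * z1 * (n * z2) * x * a = m * (z1 * (n * (z2 * x))) * a := by noncomm_ring
        _ = m * (n * (x * z2) * z1) * a := by rw [← (h2 x).eq, ← (h1 _).eq]
        _ = m * n * x * (z2 * z1 * a) := by noncomm_ring
        _ = _ := by rw [(h1 z2).eq]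
    · intro K _ h; rw [Pi.single_eq_of_ne h]; simp
    · simp
  | zero => simpa using Good.zero
  | add x y _ _ hx hy => simpa only [add_mul] using hx.add hy
  | smul r x _ hx => simpa only [smul_mul_assoc] using hx.smul r

theorem Good.comp {p : ℕ} (hp : p.Prime) (hchar : (p : k) = 0)
    {f : WeylAlgebra k d → WeylAlgebra k d} (hf : Good d p f)
    (u a : WeylAlgebra k d) (ha : a ∈ AA k d) : Good d p (fun x => u * f x * a) := by
  obtain ⟨c, hc⟩ := hf
  simp only [hc, Finset.mul_sum, Finset.sum_mul]
  refine Good.sum _ fun IJ => ?_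
  have := Good.basic hp hchar (u * ((monomialT k d fun i => (IJ.1 i : ℕ)) *
    (monomialD k d fun i => (IJ.2 i : ℕ)))) ((c IJ : WeylAlgebra k d) * a)
    (mul_mem (c IJ).2 ha)
  simpa only [mul_assoc] using this

theorem Good.mulLeft {p : ℕ} (hp : p.Prime) (hchar : (p : k) = 0)
    {f : WeylAlgebra k d → WeylAlgebra k d} (hf : Good d p f)
    (u : WeylAlgebra k d) : Good d p (fun x => u * f x) := by
  simpa using hf.comp hp hchar u 1 (one_mem _)

theorem Good.adN {p : ℕ} (hp : p.Prime) (hchar : (p : k) = 0)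
    {f : WeylAlgebra k d → WeylAlgebra k d} (hf : Good d p f) (i : Fin d) (n : ℕ) :
    Good d p (fun x => _root_.adN (t k d i) n (f x)) := by
  induction n with
  | zero => exact hf
  | succ n ih =>
    have h1 := ih.comp hp hchar 1 (t k d i) ((mem_A_iff d _).2 fun j => tt_comm k d j i)
    have h2 := (ih.mulLeft hp hchar (t k d i)).smul (-1 : k)
    have h3 := h1.add h2
    convert h3 using 2 with x
    change adT _ (_root_.adN (t k d i) n (f x)) = _
    rw [adT_apply, sub_eq_add_neg, one_mul]
    exact congrArg _ (neg_one_smul k _).symm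

theorem Good.projL {p : ℕ} (hp : p.Prime) (hchar : (p : k) = 0) (J : Fin d → ℕ)
    (l : List (Fin d)) : Good d p (fun x => _root_.projL p (del k d) (t k d) J l x) := by
  induction l with
  | nil =>
    have := Good.basic (k := k) (d := d) hp hchar 1 1 (one_mem _)
    simp only [one_mul, mul_one] at this
    exact this
  | cons i l ih => exact (ih.mulLeft hp hchar (del k d i ^ (p - 1 - J i))).adN hp hchar i (p - 1)

theorem Good.of_linear {p : ℕ} (hp : p.Prime) (hchar : (p : k) = 0)
    (g : WeylAlgebra k d →+ WeylAlgebra k d)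
    (hg : ∀ x, ∀ a ∈ AA k d, g (x * a) = g x * a) : Good d p g := by
  have hR := cast_zero hchar (WeylAlgebra k d)
  obtain ⟨v, hv⟩ := exists_inv (R := WeylAlgebra k d) hp hR d
  have h := Good.sum (p := p) Finset.univ fun K : Fin d → Fin p =>
    (Good.projL hp hchar (fun i => (K i : ℕ)) (List.finRange d)).mulLeft hp hchar
      (g (lmon (del k d) (List.finRange d) (fun i => (K i : ℕ))) * (v : WeylAlgebra k d))
  convert h using 2 with x
  obtain ⟨a, ha, rfl⟩ := spanA d hp hchar x
  rw [map_sum]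
  refine Finset.sum_congr rfl fun K _ => ?_
  rw [proj_sum hR _ _ (dd_comm k d) (dt_rel k d) K a ha, hg _ _ ((mem_A_iff d _).2 fun i => ha i K),
    mul_assoc, ← mul_assoc (v : WeylAlgebra k d), hv, one_mul]

theorem uniq {p : ℕ} (hp : p.Prime) (hchar : (p : k) = 0)
    (c : ((Fin d → Fin p) × (Fin d → Fin p)) → WeylAlgebra k d)
    (h : ∀ x, ∑ IJ : (Fin d → Fin p) × (Fin d → Fin p),
      (monomialT k d fun i => (IJ.1 i : ℕ)) * (monomialD k d fun i => (IJ.2 i : ℕ)) *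
              x * c IJ = 0) (IJ) : c IJ = 0 := by
  let E := Module.End k (WeylAlgebra k d)
  have hR : (p : E) = 0 := cast_zero hchar E
  let L : WeylAlgebra k d →ₐ[k] E := Algebra.lmul k (WeylAlgebra k d)
  let C : ((Fin d → Fin p) × (Fin d → Fin p)) → E := fun IJ => LinearMap.mulRight k (c IJ)
  have hLC : ∀ w IJ, Commute (L w) (C IJ) := fun w IJ =>
    LinearMap.ext fun x => (mul_assoc w x (c IJ)).symm
  have hL : ∀ (P : Fin d → WeylAlgebra k d) l J, L (lmon P l J) = lmon (fun i => L (P i)) l J := by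
    intro P l J
    simp [lmon, map_list_prod, Function.comp_def]
  have hd' : ∀ i j, Commute (L (del k d i)) (L (del k d j)) := fun i j => (dd_comm k d i j).map L
  have ht' : ∀ i j, Commute (L (t k d i)) (L (t k d j)) := fun i j => (tt_comm k d i j).map L
  have hdt' : ∀ i j, L (del k d i) * L (t k d j) =
      L (t k d j) * L (del k d i) + if i = j then 1 else 0 := fun i j => by
    rw [← map_mul, dt_rel, map_add, map_mul]; split_ifs <;> simp
  have h2 := lmon_indep2 hp hR (fun i => L (del k d i)) (fun i => L (t k d i)) hd' ht' hdt'
    C (fun i K => hLC _ _) (fun i K => hLC _ _) (by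
      simp only [← hL]
      refine LinearMap.ext fun x => ?_
      rw [LinearMap.zero_apply, ← h x]
      refine (LinearMap.sum_apply _ _ _).trans ?_
      refine Finset.sum_congr rfl fun IJ _ => ?_
      change lmon _ _ _ * (lmon _ _ _ * (x * c IJ)) = lmon _ _ _ * lmon _ _ _ * x * c IJ
      simp only [mul_assoc]) IJ
  have h3 := congrArg (fun f : E => f 1) h2
  exact (one_mul (c IJ)).symm.trans h3

end WeylAlgebra

open WeylAlgebra in
/-- In characteristic `p`, the natural map `W ⊗_Z A → End_A(W)`, `δ ⊗ a ↦ (x ↦ δ·x·a)`, is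
an isomorphism of rings, where `W` is the Weyl algebra, `Z` its center and `A = Z_W(k[t])`
the centralizer of the `t`'s, and `W` is a right `A`-module by right multiplication.
Since the monomials `t^I ∂^J` with exponents in `{0,…,p−1}` form a `Z`-basis of `W`, every
element of `W ⊗_Z A` is uniquely `Σ_{I,J} (t^I ∂^J) ⊗ c_{I,J}` with `c_{I,J} ∈ A`; so the
bijectivity of the natural map says precisely: every right-`A`-linear endomorphism `g` of
`W` is of the form `x ↦ Σ_{I,J} t^I ∂^J · x · c_{I,J}` for a unique family `c` in `A`. -/
theorem weylAlgebra_tensor_centralizer_equiv_end (p : ℕ) (hp : p.Prime)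
    (k : Type*) [CommRing k] (hchar : (p : k) = 0) (d : ℕ) (hd : 1 ≤ d) :
    ∀ g : WeylAlgebra k d →+ WeylAlgebra k d,
      (∀ x : WeylAlgebra k d,
        ∀ a ∈ Subalgebra.centralizer k
          ((Algebra.adjoin k (Set.range (t k d)) : Subalgebra k (WeylAlgebra k d)) :
            Set (WeylAlgebra k d)), g (x * a) = g x * a) →
      ∃! c : ((Fin d → Fin p) × (Fin d → Fin p)) →
          Subalgebra.centralizer k
            ((Algebra.adjoin k (Set.range (t k d)) : Subalgebra k (WeylAlgebra k d)) :
              Set (WeylAlgebra k d)),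
        ∀ x : WeylAlgebra k d,
          g x = ∑ IJ : (Fin d → Fin p) × (Fin d → Fin p),
            (monomialT k d fun i => (IJ.1 i : ℕ)) * (monomialD k d fun i => (IJ.2 i : ℕ)) *
              x * (c IJ : WeylAlgebra k d) := by
  intro g hg
  obtain ⟨c, hc⟩ := Good.of_linear hp hchar g hg
  refine ⟨c, hc, fun e he => ?_⟩
  funext IJ
  apply Subtype.ext
  rw [← sub_eq_zero]
  refine uniq hp hchar (fun IJ => (e IJ : WeylAlgebra k d) - (c IJ : WeylAlgebra k d)) ?_ IJ
  intro x
  simp only [mul_sub, Finset.sum_sub_distrib]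
  rw [← he x, ← hc x, sub_self]
end
end
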